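/- arXiv:1611.10315 — 2 statements merged into one kernel-verified Lean document; each statement's English description precedes it below -/
import Mathlib

section
/- Let F be a finite family of graphs that contains a bipartite graph, a co-bipartite graph and a split graph. Then the property P*_F of being induced F-free is easily testable; that is, there exists a constant c > 0 such that for every ε ∈ (0,1/2) and every graph G that has at least ε^{-c} vertices and is ε-far from being induced F-free, at least a 2/3-fraction of the ⌈ε^{-c}⌉-element vertex subsets of G induce a subgraph that is not induced F-free. -/
open scoped Classical
open Finset

noncomputable section

/-- Number of unordered vertex pairs on which two graphs on the same vertex set differ. -/
def editDist {n : ℕ} (G H : SimpleGraph (Fin n)) : ℕ :=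
  Set.ncard {e : Sym2 (Fin n) | (e ∈ G.edgeSet ∧ e ∉ H.edgeSet) ∨ (e ∉ G.edgeSet ∧ e ∈ H.edgeSet)}

/-- `G` is `ε`-far from satisfying the graph property `P`. -/
def Far (P : ∀ n : ℕ, Set (SimpleGraph (Fin n))) {n : ℕ} (G : SimpleGraph (Fin n)) (ε : ℝ) : Prop :=
  ∀ H : SimpleGraph (Fin n), H ∈ P n → ε * (n : ℝ) ^ 2 ≤ (editDist G H : ℝ)

/-- The subgraph induced by a vertex subset `Q` of size `m`, as a graph on `Fin m`. -/
def inducedOn {n : ℕ} (G : SimpleGraph (Fin n)) {m : ℕ} (Q : Finset (Fin n))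
    (h : Q.card = m) : SimpleGraph (Fin m) :=
  G.comap fun i => ((Q.orderIsoOfFin h) i : Fin n)

/-- A graph property is easily testable if for some constant `c > 0`, for every `ε ∈ (0,1/2)`
and every graph on at least `ε ^ (-c)` vertices which is `ε`-far from `P`, at least a
`2/3`-fraction of the `⌈ε ^ (-c)⌉`-element vertex subsets induce a subgraph not satisfying `P`. -/
def EasilyTestable (P : ∀ n : ℕ, Set (SimpleGraph (Fin n))) : Prop :=
  ∃ c : ℝ, 0 < c ∧ ∀ ε : ℝ, 0 < ε → ε < 1 / 2 → ∀ n : ℕ, ∀ G : SimpleGraph (Fin n),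
    ε ^ (-c) ≤ (n : ℝ) → Far P G ε →
    (2 / 3 : ℝ) * (((Finset.univ : Finset (Fin n)).powersetCard ⌈ε ^ (-c)⌉₊).card : ℝ) ≤
      ((((Finset.univ : Finset (Fin n)).powersetCard ⌈ε ^ (-c)⌉₊).filter
        fun Q => ∃ h : Q.card = ⌈ε ^ (-c)⌉₊, inducedOn G Q h ∉ P ⌈ε ^ (-c)⌉₊).card : ℝ)

/-- The property of being induced `𝓕`-free. -/
def InducedFree (𝓕 : Set (Σ k : ℕ, SimpleGraph (Fin k))) : ∀ n : ℕ, Set (SimpleGraph (Fin n)) :=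
  fun n => {G | ∀ p ∈ 𝓕, IsEmpty (p.2 ↪g G)}

/-- A graph is bipartite: its vertex set can be partitioned into two independent sets. -/
def IsBipGraph {V : Type*} (H : SimpleGraph V) : Prop :=
  ∃ A : Set V, (∀ u ∈ A, ∀ v ∈ A, ¬ H.Adj u v) ∧ (∀ u ∉ A, ∀ v ∉ A, ¬ H.Adj u v)

/-- A graph is co-bipartite: its vertex set can be partitioned into two cliques. -/
def IsCoBipGraph {V : Type*} (H : SimpleGraph V) : Prop :=
  ∃ A : Set V, (∀ u ∈ A, ∀ v ∈ A, u ≠ v → H.Adj u v) ∧ (∀ u ∉ A, ∀ v ∉ A, u ≠ v → H.Adj u v)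

/-- A graph is split: its vertex set can be partitioned into a clique and an independent set. -/
def IsSplitGraph {V : Type*} (H : SimpleGraph V) : Prop :=
  ∃ A : Set V, (∀ u ∈ A, ∀ v ∈ A, u ≠ v → H.Adj u v) ∧ (∀ u ∉ A, ∀ v ∉ A, ¬ H.Adj u v)

lemma ramsey_aux {W : Type*} (Γ : SimpleGraph W) : ∀ (m a b : ℕ), a + b = m → ∀ S : Finset W, 2 ^ m ≤ #S →
    (∃ t ⊆ S, #t = a ∧ ∀ u ∈ t, ∀ v ∈ t, u ≠ v → Γ.Adj u v) ∨
    (∃ t ⊆ S, #t = b ∧ ∀ u ∈ t, ∀ v ∈ t, u ≠ v → ¬ Γ.Adj u v) := by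
  intro m
  induction m with
  | zero =>
    intro a b hab S hS
    left; exact ⟨∅, by simp, by simp; omega, by simp⟩
  | succ m ih =>
    intro a b hab S hS
    rcases Nat.eq_zero_or_pos a with ha | ha
    · left; exact ⟨∅, by simp, by simp; omega, by simp⟩
    rcases Nat.eq_zero_or_pos b with hb | hb
    · right; exact ⟨∅, by simp, by simp; omega, by simp⟩
    have hne : S.Nonempty := by
      rw [← Finset.card_pos]; exact lt_of_lt_of_le (by positivity) hS
    obtain ⟨v, hv⟩ := hne
    have hc := Finset.card_filter_add_card_filter_not (s := S.erase v) (fun u => Γ.Adj v u)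
    rw [Finset.card_erase_of_mem hv] at hc
    have h2 : 2 ^ (m+1) = 2 * 2 ^ m := by ring
    have h3 : 0 < 2 ^ m := by positivity
    rcases le_or_gt (2 ^ m) #({u ∈ S.erase v | Γ.Adj v u}) with h | h
    · rcases ih (a-1) b (by omega) _ h with ⟨t, ht, hta, htc⟩ | ⟨t, ht, htb, hti⟩
      · left
        have hvt : v ∉ t := fun hh => by simpa using ht hh
        refine ⟨insert v t, ?_, ?_, ?_⟩
        · intro x hx
          rcases Finset.mem_insert.1 hx with rfl | hx
          · exact hv
          · have := ht hx; simp at this; exact this.1.2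
        · rw [Finset.card_insert_of_notMem hvt]; omega
        · intro x hx y hy hxy
          rcases Finset.mem_insert.1 hx with rfl | hx' <;> rcases Finset.mem_insert.1 hy with rfl | hy'
          · exact absurd rfl hxy
          · have := ht hy'; simp at this; exact this.2
          · have := ht hx'; simp at this; exact this.2.symm
          · exact htc x hx' y hy' hxy
      · right
        refine ⟨t, ht.trans ?_, htb, hti⟩
        exact (Finset.filter_subset _ _).trans (Finset.erase_subset _ _)
    · have h : 2 ^ m ≤ #({u ∈ S.erase v | ¬ Γ.Adj v u}) := by omega
      rcases ih a (b-1) (by omega) _ h with ⟨t, ht, hta, htc⟩ | ⟨t, ht, hta, htc⟩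
      · left
        refine ⟨t, ht.trans ?_, hta, htc⟩
        exact (Finset.filter_subset _ _).trans (Finset.erase_subset _ _)
      · right
        have hvt : v ∉ t := fun hh => by simpa using ht hh
        refine ⟨insert v t, ?_, ?_, ?_⟩
        · intro x hx
          rcases Finset.mem_insert.1 hx with rfl | hx
          · exact hv
          · have := ht hx; simp at this; exact this.1.2
        · rw [Finset.card_insert_of_notMem hvt]; omega
        · intro x hx y hy hxy
          rcases Finset.mem_insert.1 hx with rfl | hx' <;> rcases Finset.mem_insert.1 hy with rfl | hy'
          · exact absurd rfl hxy
          · have := ht hy'; simp at this; exact this.2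
          · have := ht hx'; simp at this; exact fun h => this.2 h.symm
          · exact htc x hx' y hy' hxy

lemma ramsey_emb {W : Type*} (Γ : SimpleGraph W) (k : ℕ) (S : Finset W) (hS : 2 ^ (k + k) ≤ #S) :
    ∃ c : Prop, ∃ τ : Fin k ↪ W, (∀ a, τ a ∈ S) ∧ ∀ a b, a ≠ b → (Γ.Adj (τ a) (τ b) ↔ c) := by
  rcases ramsey_aux Γ _ k k rfl S hS with ⟨t, ht, hk, h⟩ | ⟨t, ht, hk, h⟩
  · refine ⟨True, (t.equivFinOfCardEq hk).symm.toEmbedding.trans (Function.Embedding.subtype _), ?_, ?_⟩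
    · intro a; exact ht (by simp)
    · intro a b hab
      simp only [iff_true]
      apply h _ (by simp) _ (by simp)
      intro hh; apply hab; simpa [Subtype.val_inj] using hh
  · refine ⟨False, (t.equivFinOfCardEq hk).symm.toEmbedding.trans (Function.Embedding.subtype _), ?_, ?_⟩
    · intro a; exact ht (by simp)
    · intro a b hab
      simp only [iff_false]
      apply h _ (by simp) _ (by simp)
      intro hh; apply hab; simpa [Subtype.val_inj] using hh

lemma types_of {𝓕 : Set (Σ k : ℕ, SimpleGraph (Fin k))}
    (hbip : ∃ p ∈ 𝓕, IsBipGraph p.2)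
    (hcobip : ∃ p ∈ 𝓕, IsCoBipGraph p.2)
    (hsplit : ∃ p ∈ 𝓕, IsSplitGraph p.2) (cA cB : Prop) :
    ∃ p ∈ 𝓕, ∃ U : Set (Fin p.1), (∀ u ∈ U, ∀ v ∈ U, u ≠ v → (p.2.Adj u v ↔ cA)) ∧
      (∀ u ∉ U, ∀ v ∉ U, u ≠ v → (p.2.Adj u v ↔ cB)) := by
  by_cases hA : cA <;> by_cases hB : cB
  · obtain ⟨p, hp, U, h1, h2⟩ := hcobip
    exact ⟨p, hp, U, by simpa [hA] using h1, by simpa [hB] using h2⟩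
  · obtain ⟨p, hp, U, h1, h2⟩ := hsplit
    exact ⟨p, hp, U, by simpa [hA] using h1, fun u hu v hv _ => by simpa [hB] using h2 u hu v hv⟩
  · obtain ⟨p, hp, U, h1, h2⟩ := hsplit
    exact ⟨p, hp, Uᶜ, fun u hu v hv _ => by simpa [hA] using h2 u hu v hv,
      fun u hu v hv huv => by simpa [hB] using h1 u (by simpa using hu) v (by simpa using hv) huv⟩
  · obtain ⟨p, hp, U, h1, h2⟩ := hbip
    exact ⟨p, hp, U, fun u hu v hv _ => by simpa [hA] using h1 u hu v hv,
      fun u hu v hv _ => by simpa [hB] using h2 u hu v hv⟩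

lemma shatter_copy {𝓕 : Set (Σ k : ℕ, SimpleGraph (Fin k))} (k : ℕ) (hk : ∀ p ∈ 𝓕, p.1 ≤ k)
    (htyp : ∀ cA cB : Prop, ∃ p ∈ 𝓕, ∃ U : Set (Fin p.1),
      (∀ u ∈ U, ∀ v ∈ U, u ≠ v → (p.2.Adj u v ↔ cA)) ∧
      (∀ u ∉ U, ∀ v ∉ U, u ≠ v → (p.2.Adj u v ↔ cB)))
    {α β : Type} (Γ : SimpleGraph (β ⊕ α)) (A : Finset α)
    (hA : 2 ^ (2 ^ (2 ^ ((k + k) + (k + k))) + 2 ^ (2 ^ ((k + k) + (k + k)))) ≤ #A)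
    (hsh : ∀ t ⊆ A, ∃ i : β, ∀ a ∈ A, Γ.Adj (Sum.inl i) (Sum.inr a) ↔ a ∈ t) :
    ∃ p ∈ 𝓕, Nonempty (p.2 ↪g Γ) := by
  set M := 2 ^ ((k + k) + (k + k)) with hM
  obtain ⟨cA, τ, hτA, hτ⟩ := ramsey_emb (Γ.comap (Sum.inr : α → β ⊕ α)) (2 ^ M) A hA
  have hcard : Fintype.card (Fin M → Bool) = 2 ^ M := by simp
  let e0 := Fintype.equivFinOfCardEq hcard
  let e : (Fin M → Bool) → α := fun f => τ (e0 f)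
  have he : Function.Injective e := τ.injective.comp e0.injective
  have heA : ∀ f, e f ∈ A := fun f => hτA _
  have headj : ∀ f g, f ≠ g → (Γ.Adj (Sum.inr (e f)) (Sum.inr (e g)) ↔ cA) := by
    intro f g hfg
    exact hτ _ _ (fun h => hfg (e0.injective h))
  have hb : ∀ i : Fin M, ∃ b : β, ∀ f, Γ.Adj (Sum.inl b) (Sum.inr (e f)) ↔ f i = true := by
    intro i
    obtain ⟨b, hb⟩ := hsh ((Finset.univ.filter (fun f : Fin M → Bool => f i = true)).image e) (by
      intro x hx
      obtain ⟨f, _, rfl⟩ := Finset.mem_image.1 hx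
      exact heA f)
    refine ⟨b, fun f => ?_⟩
    rw [hb _ (heA f)]
    simp [he.eq_iff]
  choose b hb using hb
  have hbinj : Function.Injective b := by
    intro i j hij
    by_contra hne
    have h1 := hb i (fun l => decide (l = i))
    have h2 := hb j (fun l => decide (l = i))
    rw [hij, h2] at h1
    simp at h1
    exact hne h1.symm
  obtain ⟨cB, ρ, -, hρ⟩ := ramsey_emb (Γ.comap (fun i : Fin M => (Sum.inl (b i) : β ⊕ α))) (k + k) Finset.univ
    (by simp [hM])
  obtain ⟨p, hp, U, h1, h2⟩ := htyp cA cB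
  have hpk := hk p hp
  let P : Fin p.1 → Fin (k + k) → Prop := fun u i =>
    (∃ v : Fin p.1, i.val = v.val ∧ p.2.Adj u v) ∨ i.val = k + u.val
  let f : Fin p.1 → Fin M → Bool := fun u l => decide (∃ i, ρ i = l ∧ P u i)
  have hf : ∀ u i, f u (ρ i) = true ↔ P u i := by
    intro u i
    simp [f]
  let ι : Fin p.1 → Fin (k + k) := fun v => ⟨v.val, by omega⟩
  have hPι : ∀ u v, P u (ι v) ↔ p.2.Adj u v := by
    intro u v
    constructor
    · rintro (⟨w, hw, h⟩ | h)
      · have : v = w := Fin.ext hw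
        rw [this]; exact h
      · have := v.2; simp only [ι] at h; omega
    · intro h; exact Or.inl ⟨v, rfl, h⟩
  have hfinj : Function.Injective f := by
    intro u v huv
    have h3 : P u ⟨k + u.val, by omega⟩ := Or.inr rfl
    rw [← hf, huv, hf] at h3
    rcases h3 with ⟨w, hw, h⟩ | h
    · have := w.2; simp only at hw; omega
    · apply Fin.ext; simp only at h; omega
  have hιinj : Function.Injective ι := by
    intro u v huv
    apply Fin.ext; simpa [ι] using huv
  let g : Fin p.1 → β ⊕ α := fun u => if u ∈ U then Sum.inr (e (f u)) else Sum.inl (b (ρ (ι u)))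
  have hcross : ∀ u ∈ U, ∀ v ∉ U, (Γ.Adj (Sum.inl (b (ρ (ι v)))) (Sum.inr (e (f u))) ↔ p.2.Adj u v) := by
    intro u hu v hv
    rw [hb, hf, hPι]
  have hginj : Function.Injective g := by
    intro u v huv
    by_cases hu : u ∈ U <;> by_cases hv : v ∈ U <;> simp only [g, hu, hv, if_true, if_false] at huv
    · exact hfinj (he (Sum.inr.inj huv))
    · exact absurd huv (by simp)
    · exact absurd huv (by simp)
    · exact hιinj (ρ.injective (hbinj (Sum.inl.inj huv)))
  refine ⟨p, hp, ⟨⟨⟨g, hginj⟩, ?_⟩⟩⟩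
  intro u v
  change Γ.Adj (g u) (g v) ↔ p.2.Adj u v
  rcases eq_or_ne u v with rfl | huv
  · simp
  by_cases hu : u ∈ U <;> by_cases hv : v ∈ U <;> simp only [g, hu, hv, if_true, if_false]
  · rw [headj _ _ (fun h => huv (hfinj h)), h1 u hu v hv huv]
  · rw [SimpleGraph.adj_comm, hcross u hu v hv]
  · rw [hcross v hv u hu, SimpleGraph.adj_comm]
  · rw [h2 u hu v hv huv]
    exact hρ _ _ (fun h => huv (hιinj h))

lemma few_traces {𝓕 : Set (Σ k : ℕ, SimpleGraph (Fin k))} (k : ℕ) (hk : ∀ p ∈ 𝓕, p.1 ≤ k)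
    (htyp : ∀ cA cB : Prop, ∃ p ∈ 𝓕, ∃ U : Set (Fin p.1),
      (∀ u ∈ U, ∀ v ∈ U, u ≠ v → (p.2.Adj u v ↔ cA)) ∧
      (∀ u ∉ U, ∀ v ∉ U, u ≠ v → (p.2.Adj u v ↔ cB))) :
    ∃ d : ℕ, ∀ (N s : ℕ) (Γ : SimpleGraph (Fin N ⊕ Fin s)) (I : Finset (Fin N)),
    (∀ p ∈ 𝓕, IsEmpty (p.2 ↪g Γ)) →
    (∀ i ∈ I, ∀ j ∈ I, i ≠ j → ∃ a : Fin s, ¬ (Γ.Adj (Sum.inl i) (Sum.inr a) ↔ Γ.Adj (Sum.inl j) (Sum.inr a))) →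
    #I ≤ (s + 1) ^ d := by
  refine ⟨2 ^ (2 ^ (2 ^ ((k + k) + (k + k))) + 2 ^ (2 ^ ((k + k) + (k + k)))), ?_⟩
  intro N s Γ I hfree hdist
  set d := 2 ^ (2 ^ (2 ^ ((k + k) + (k + k))) + 2 ^ (2 ^ ((k + k) + (k + k)))) with hd
  let tr : Fin N → Finset (Fin s) := fun i => Finset.univ.filter fun a => Γ.Adj (Sum.inl i) (Sum.inr a)
  have hinj : Set.InjOn tr I := by
    intro i hi j hj hij
    by_contra hne
    obtain ⟨a, ha⟩ := hdist i hi j hj hne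
    apply ha
    have : a ∈ tr i ↔ a ∈ tr j := by rw [hij]
    simpa [tr] using this
  rw [← Finset.card_image_of_injOn hinj]
  have hvc : (I.image tr).vcDim ≤ d := by
    apply Finset.sup_le
    intro A hA
    by_contra hlt
    push Not at hlt
    rw [Finset.mem_shatterer] at hA
    obtain ⟨p, hp, ⟨g⟩⟩ := shatter_copy k hk htyp Γ A hlt.le (by
      intro t ht
      obtain ⟨u, hu, hut⟩ := hA ht
      obtain ⟨i, hi, rfl⟩ := Finset.mem_image.1 hu
      refine ⟨i, fun a ha => ?_⟩
      rw [← hut]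
      simp [tr, ha])
    exact (hfree p hp).false g
  calc #(I.image tr) ≤ #(I.image tr).shatterer := Finset.card_le_card_shatterer _
    _ ≤ ∑ k ∈ Finset.Iic (I.image tr).vcDim, (Fintype.card (Fin s)).choose k := Finset.card_shatterer_le_sum_vcDim
    _ ≤ ∑ k ∈ Finset.Iic d, s.choose k := by
        simp only [Fintype.card_fin]
        apply Finset.sum_le_sum_of_subset
        intro x; simp; omega
    _ ≤ ∑ k ∈ Finset.range (d+1), s ^ k * 1 ^ (d - k) * d.choose k := by
        have : Finset.Iic d = Finset.range (d+1) := by ext; simp [Nat.lt_succ_iff]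
        rw [this]
        apply Finset.sum_le_sum
        intro x hx
        have hx' : x ≤ d := by simp at hx; omega
        have h1 := Nat.choose_le_pow s x
        have h2 := Nat.choose_pos hx'
        rw [one_pow, mul_one]
        exact h1.trans (Nat.le_mul_of_pos_right _ h2)
    _ = (s + 1) ^ d := by rw [add_pow]; simp

lemma pi_sum_le {ι κ V : Type*} [Fintype ι] [Fintype κ] [DecidableEq ι] [DecidableEq κ] (S : ι → Finset V) (σ : κ ↪ ι)
    (g : (κ → V) → ℝ) (hg : ∀ y, 0 ≤ g y) :
    (∑ x ∈ Fintype.piFinset S, g (fun j => x (σ j))) * ∏ j, (#(S (σ j)) : ℝ) ≤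
    (∑ y ∈ Fintype.piFinset (fun j => S (σ j)), g y) * ∏ a, (#(S a) : ℝ) := by
  have hmaps : ∀ x ∈ Fintype.piFinset S, (fun j => x (σ j)) ∈ Fintype.piFinset (fun j => S (σ j)) := by
    intro x hx
    rw [Fintype.mem_piFinset] at hx ⊢
    intro j; exact hx _
  rw [← Finset.sum_fiberwise_of_maps_to hmaps]
  have hprod : ∏ a, (#(S a) : ℝ) = (∏ j, (#(S (σ j)) : ℝ)) * ∏ a : {a // a ∉ Set.range σ}, (#(S a) : ℝ) := by
    rw [← Fintype.prod_subtype_mul_prod_subtype (fun a => a ∈ Set.range σ) (fun a => (#(S a) : ℝ))]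
    congr 1
    convert (Fintype.prod_equiv (Equiv.ofInjective σ σ.injective) (fun j => (#(S (σ j)) : ℝ))
      (fun a => (#(S a.1) : ℝ)) (fun j => rfl)).symm
  have hfib : ∀ y : κ → V, (#{x ∈ Fintype.piFinset S | (fun j => x (σ j)) = y} : ℝ) ≤
      ∏ a : {a // a ∉ Set.range σ}, (#(S a) : ℝ) := by
    intro y
    rw [← Nat.cast_prod, ← Fintype.card_piFinset]
    norm_cast
    apply Finset.card_le_card_of_injOn (fun x a => x a.1)
    · intro x hx
      simp only [Finset.coe_filter, Fintype.mem_piFinset, Set.mem_ofPred_eq] at hx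
      simp only [Finset.mem_coe, Fintype.mem_piFinset]
      intro a; exact hx.1 _
    · intro x hx x' hx' hxx
      simp only [Finset.coe_filter, Fintype.mem_piFinset, Set.mem_ofPred_eq] at hx hx'
      funext a
      by_cases ha : a ∈ Set.range σ
      · obtain ⟨j, rfl⟩ := ha
        exact congrFun (hx.2.trans hx'.2.symm) j
      · exact congrFun hxx ⟨a, ha⟩
  rw [hprod, Finset.sum_mul, Finset.sum_mul]
  apply Finset.sum_le_sum
  intro y hy
  have : ∑ x ∈ Fintype.piFinset S with (fun j => x (σ j)) = y, g (fun j => x (σ j)) =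
      #{x ∈ Fintype.piFinset S | (fun j => x (σ j)) = y} * g y := by
    rw [Finset.sum_congr rfl (g := fun _ => g y)]
    · simp
    · intro x hx
      rw [(Finset.mem_filter.1 hx).2]
  rw [this]
  have h1 := hfib y
  have h2 : (0:ℝ) ≤ ∏ j, (#(S (σ j)) : ℝ) := by positivity
  have h3 := mul_le_mul_of_nonneg_right h1 (mul_nonneg (hg y) h2)
  nlinarith

lemma pi_sum_two {ι V : Type*} [Fintype ι] [DecidableEq ι] (S : ι → Finset V) (i j : ι) (hij : i ≠ j)
    (g : V → V → ℝ) (hg : ∀ a b, 0 ≤ g a b) :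
    (∑ x ∈ Fintype.piFinset S, g (x i) (x j)) * ((#(S i) : ℝ) * #(S j)) ≤
    (∑ a ∈ S i, ∑ b ∈ S j, g a b) * ∏ a, (#(S a) : ℝ) := by
  have hinj : Function.Injective (fun b : Bool => if b then i else j) := by
    intro a b; cases a <;> cases b <;> simp [hij, hij.symm]
  have h := pi_sum_le S ⟨_, hinj⟩ (fun y => g (y true) (y false)) (fun y => hg _ _)
  simp only [Function.Embedding.coeFn_mk, Fintype.prod_bool, if_true] at h
  refine h.trans (le_of_eq ?_)
  congr 1
  rw [← Finset.sum_product']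
  refine Finset.sum_nbij' (fun y => (y true, y false)) (fun z b => if b then z.1 else z.2) ?_ ?_ ?_ ?_ ?_
  · intro y hy
    rw [Fintype.mem_piFinset] at hy
    exact Finset.mem_product.2 ⟨by simpa using hy true, by simpa using hy false⟩
  · intro z hz
    rw [Finset.mem_product] at hz
    rw [Fintype.mem_piFinset]
    intro b; cases b <;> simp [hz.1, hz.2]
  · intro y hy
    funext b; cases b <;> simp
  · intro z hz; simp
  · intro y hy; simp

/-- number of (possibly non-injective) tuples inducing `p` -/
def indCount {V : Type*} [Fintype V] (p : Σ k : ℕ, SimpleGraph (Fin k)) (G : SimpleGraph V) : ℕ :=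
  #{y : Fin p.1 → V | ∀ u v, u ≠ v → (G.Adj (y u) (y v) ↔ p.2.Adj u v)}

def FewC {V : Type*} [Fintype V] (𝓕 : Set (Σ k : ℕ, SimpleGraph (Fin k))) (G : SimpleGraph V) (Q : ℕ) : Prop :=
  ∀ p ∈ 𝓕, Q * indCount p G < Fintype.card V ^ p.1

lemma FewC.mono {V : Type*} [Fintype V] {𝓕 : Set (Σ k : ℕ, SimpleGraph (Fin k))} {G : SimpleGraph V} {Q Q' : ℕ}
    (h : FewC 𝓕 G Q) (hQ : Q' ≤ Q) : FewC 𝓕 G Q' := fun p hp =>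
  lt_of_le_of_lt (Nat.mul_le_mul_right _ hQ) (h p hp)

lemma copies_arith {Q cnt np Mp P A ic Pr : ℝ} (hQ : 0 ≤ Q) (hc : 0 ≤ cnt) (hMp : 0 ≤ Mp) (hPr : 0 ≤ Pr)
    (hnp : 0 < np) (h1 : cnt * P ≤ A * Pr) (h2 : A ≤ ic) (h3 : np ≤ Mp * P) (h4 : Q * ic ≤ np) :
    Q * cnt ≤ Mp * Pr := by
  have h5 : Q * cnt * np ≤ Mp * Pr * np := by
    calc Q * cnt * np ≤ Q * cnt * (Mp * P) := by gcongr
      _ = Q * Mp * (cnt * P) := by ring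
      _ ≤ Q * Mp * (ic * Pr) := by
          exact mul_le_mul_of_nonneg_left (h1.trans (by gcongr)) (by positivity)
      _ = Mp * Pr * (Q * ic) := by ring
      _ ≤ _ := by gcongr
  exact le_of_mul_le_mul_right h5 hnp

lemma copies_bound {V ι : Type*} [Fintype V] [Fintype ι] [DecidableEq ι] (𝓕 : Finset (Σ k : ℕ, SimpleGraph (Fin k)))
    (k : ℕ) (hk : ∀ p ∈ 𝓕, p.1 ≤ k) (G : SimpleGraph V) (Q M : ℕ) (hfew : FewC (𝓕 : Set _) G Q)
    (S : ι → Finset V) (hS : ∀ a, Fintype.card V ≤ M * #(S a)) (hM : 0 < Fintype.card ι * M)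
    (hV : 0 < Fintype.card V) :
    (Q : ℝ) * #{x ∈ Fintype.piFinset S | ∃ p ∈ 𝓕, Nonempty (p.2 ↪g G.comap x)} ≤
      (#𝓕 : ℝ) * (Fintype.card ι * M : ℝ) ^ k * ∏ a, (#(S a) : ℝ) := by
  set n := Fintype.card V with hn
  obtain ⟨Pr, hPr⟩ : ∃ Pr : ℝ, Pr = ∏ a, (#(S a) : ℝ) := ⟨_, rfl⟩
  have hPr0 : 0 ≤ Pr := by rw [hPr]; exact Finset.prod_nonneg (fun _ _ => Nat.cast_nonneg _)
  rw [← hPr]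
  have hone : ∀ p ∈ 𝓕, ∀ σ : Fin p.1 ↪ ι,
      (Q : ℝ) * #{x ∈ Fintype.piFinset S | ∀ u v, u ≠ v → (G.Adj (x (σ u)) (x (σ v)) ↔ p.2.Adj u v)} ≤ (M : ℝ) ^ p.1 * Pr := by
    intro p hp σ
    have h1 := pi_sum_le S σ (fun y => if (∀ u v, u ≠ v → (G.Adj (y u) (y v) ↔ p.2.Adj u v)) then (1:ℝ) else 0)
      (fun y => by positivity)
    rw [Finset.sum_boole, Finset.sum_boole, ← hPr] at h1
    have h2 : (#{y ∈ Fintype.piFinset (fun j => S (σ j)) | ∀ u v, u ≠ v → (G.Adj (y u) (y v) ↔ p.2.Adj u v)} : ℝ) ≤ indCount p G := by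
      unfold indCount
      norm_cast
      apply Finset.card_le_card
      intro y hy
      simp only [Finset.mem_filter, Finset.mem_univ, true_and] at hy ⊢
      exact hy.2
    have h3 : (n : ℝ) ^ p.1 ≤ M ^ p.1 * ∏ j, (#(S (σ j)) : ℝ) := by
      have : ∏ j : Fin p.1, (n : ℝ) ≤ ∏ j : Fin p.1, ((M:ℝ) * #(S (σ j))) := by
        apply Finset.prod_le_prod
        · intros; positivity
        · intro j _; exact_mod_cast hS (σ j)
      rw [Finset.prod_mul_distrib] at this
      simpa using this
    have h4 : (Q : ℝ) * indCount p G ≤ (n:ℝ) ^ p.1 := by exact_mod_cast (hfew p hp).le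
    have hnp : (0:ℝ) < (n:ℝ)^p.1 := by positivity
    exact copies_arith (by positivity) (by positivity) (by positivity) hPr0 hnp h1 h2 h3 h4
  have hsub : {x ∈ Fintype.piFinset S | ∃ p ∈ 𝓕, Nonempty (p.2 ↪g G.comap x)} ⊆
      𝓕.biUnion fun p => (Finset.univ : Finset (Fin p.1 ↪ ι)).biUnion fun σ =>
        {x ∈ Fintype.piFinset S | ∀ u v, u ≠ v → (G.Adj (x (σ u)) (x (σ v)) ↔ p.2.Adj u v)} := by
    intro x hx
    simp only [Finset.mem_filter] at hx
    obtain ⟨hxS, p, hp, ⟨f⟩⟩ := hx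
    simp only [Finset.mem_biUnion, Finset.mem_filter, Finset.mem_univ, true_and]
    refine ⟨p, hp, f.toEmbedding, hxS, fun u v _ => ?_⟩
    exact f.map_rel_iff
  have hcard : (#{x ∈ Fintype.piFinset S | ∃ p ∈ 𝓕, Nonempty (p.2 ↪g G.comap x)} : ℝ) ≤
      ∑ p ∈ 𝓕, ∑ σ : Fin p.1 ↪ ι, (#{x ∈ Fintype.piFinset S | ∀ u v, u ≠ v → (G.Adj (x (σ u)) (x (σ v)) ↔ p.2.Adj u v)} : ℝ) := by
    norm_cast
    refine (Finset.card_le_card hsub).trans (Finset.card_biUnion_le.trans ?_)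
    apply Finset.sum_le_sum
    intro p _
    exact Finset.card_biUnion_le
  calc _ ≤ (Q:ℝ) * _ := mul_le_mul_of_nonneg_left hcard (by positivity)
    _ = ∑ p ∈ 𝓕, ∑ σ : Fin p.1 ↪ ι, (Q:ℝ) * (#{x ∈ Fintype.piFinset S | ∀ u v, u ≠ v → (G.Adj (x (σ u)) (x (σ v)) ↔ p.2.Adj u v)} : ℝ) := by
      rw [Finset.mul_sum]; simp_rw [Finset.mul_sum]
    _ ≤ ∑ p ∈ 𝓕, ∑ σ : Fin p.1 ↪ ι, (M : ℝ) ^ p.1 * Pr := by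
      apply Finset.sum_le_sum; intro p hp
      apply Finset.sum_le_sum; intro σ _
      exact hone p hp σ
    _ ≤ ∑ p ∈ 𝓕, (Fintype.card ι * M : ℝ) ^ k * Pr := by
      apply Finset.sum_le_sum; intro p hp
      rw [Finset.sum_const, nsmul_eq_mul]
      have h1 : (#(Finset.univ : Finset (Fin p.1 ↪ ι)) : ℝ) ≤ (Fintype.card ι : ℝ) ^ p.1 := by
        rw [Finset.card_univ, Fintype.card_embedding_eq]
        simp only [Fintype.card_fin]
        exact_mod_cast Nat.descFactorial_le_pow _ _
      have h2 : (1:ℝ) ≤ Fintype.card ι * M := by exact_mod_cast hM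
      calc _ ≤ (Fintype.card ι : ℝ) ^ p.1 * ((M : ℝ) ^ p.1 * Pr) := by gcongr
        _ = (Fintype.card ι * M : ℝ) ^ p.1 * Pr := by rw [mul_pow]; ring
        _ ≤ _ := by gcongr; exact hk p hp
    _ = _ := by rw [Finset.sum_const, nsmul_eq_mul]; ring

def dif {V : Type*} [Fintype V] (G : SimpleGraph V) (x y : V) : Finset V :=
  {z | ¬ (G.Adj x z ↔ G.Adj y z)}

lemma dif_comm {V : Type*} [Fintype V] (G : SimpleGraph V) (x y : V) : dif G x y = dif G y x := by
  ext z; simp [dif, iff_comm]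

lemma dif_tri {V : Type*} [Fintype V] (G : SimpleGraph V) (x y w : V) :
    #(dif G x y) ≤ #(dif G x w) + #(dif G w y) := by
  refine (Finset.card_le_card ?_).trans (Finset.card_union_le _ _)
  intro z; simp only [dif, Finset.mem_filter, Finset.mem_univ, true_and, Finset.mem_union]; tauto

lemma half_pow (q : ℕ) (hq : 1 ≤ q) : (1 - 1 / (q:ℝ)) ^ q ≤ 1 / 2 := by
  have hq' : (1:ℝ) ≤ q := by exact_mod_cast hq
  have h := Real.one_sub_div_pow_le_exp_neg (n := q) (t := 1) hq'
  refine h.trans ?_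
  have h2 := Real.exp_one_gt_d9
  rw [Real.exp_neg, one_div]
  apply inv_anti₀ (by norm_num); linarith

lemma unsep_count {V : Type*} [Fintype V] (D : Finset V) (q u : ℕ) (hq : 1 ≤ q) (hD : Fintype.card V < q * #D) :
    (#{z : Fin (q * u) → V | ∀ a, z a ∉ D} : ℝ) * 2 ^ u ≤ (Fintype.card V : ℝ) ^ (q * u) := by
  have h0 : ({z : Fin (q * u) → V | ∀ a, z a ∉ D} : Finset _) = Fintype.piFinset (fun _ => Dᶜ) := by
    ext z; simp
  rw [h0, Fintype.card_piFinset]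
  simp only [Finset.prod_const, Finset.card_univ, Fintype.card_fin]
  rw [Finset.card_compl]
  have hle : #D ≤ Fintype.card V := Finset.card_le_univ D
  push_cast [Nat.cast_sub hle]
  have hD' : ((Fintype.card V : ℕ) : ℝ) ≤ q * #D := by exact_mod_cast hD.le
  have hle' : (#D:ℝ) ≤ ((Fintype.card V : ℕ) : ℝ) := by exact_mod_cast hle
  set n : ℝ := ((Fintype.card V : ℕ) : ℝ)
  have hn0 : 0 ≤ n := by positivity
  have hq' : (1:ℝ) ≤ q := by exact_mod_cast hq
  have h1 : n - #D ≤ n * (1 - 1 / q) := by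
    have : n / q ≤ #D := by rw [div_le_iff₀ (by linarith)]; linarith
    rw [mul_sub, mul_one, mul_one_div]; linarith
  have h2 : 0 ≤ n - #D := by
    linarith
  calc (n - #D) ^ (q * u) * 2 ^ u ≤ (n * (1 - 1 / q)) ^ (q * u) * 2 ^ u := by gcongr
    _ = n ^ (q * u) * (((1 - 1 / q) ^ q) ^ u * 2 ^ u) := by rw [mul_pow, pow_mul (1 - 1 / (q:ℝ))]; ring
    _ ≤ n ^ (q * u) * ((1/2) ^ u * 2 ^ u) := by
      have : 0 ≤ 1 - 1 / (q:ℝ) := by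
        rw [sub_nonneg, div_le_one (by linarith)]; exact hq'
      gcongr
      exact half_pow q hq
    _ = n ^ (q * u) := by rw [← mul_pow]; norm_num

lemma cover_arith {q N Q T B F U a b X : ℝ} (hQ : 1 ≤ Q) (hU : 0 < U) (hq : 1 ≤ q) (hN : 1 ≤ N) (hT : 0 < T)
    (h1 : 4 * q * B ≤ N) (h2 : 4 * q * F ≤ Q) (h3 : 4 * q * N ^ 2 ≤ U) (hb1 : Q * a ≤ F * T)
    (hb2 : b * U ≤ N ^ 2 * T) (hlow : N * T ≤ q * X) (hup : X ≤ B * T + N * a + N * b) : False := by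
  have ha : 4 * q * a ≤ T := by
    have : Q * (4 * q * a) ≤ Q * T := by
      calc Q * (4 * q * a) = 4 * q * (Q * a) := by ring
        _ ≤ 4 * q * (F * T) := by gcongr
        _ = (4 * q * F) * T := by ring
        _ ≤ Q * T := by gcongr
    exact le_of_mul_le_mul_left this (by linarith)
  have hb : 4 * q * b ≤ T := by
    have : U * (4 * q * b) ≤ U * T := by
      calc U * (4 * q * b) = 4 * q * (b * U) := by ring
        _ ≤ 4 * q * (N ^ 2 * T) := by gcongr
        _ = (4 * q * N ^ 2) * T := by ring
        _ ≤ U * T := by gcongr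
    exact le_of_mul_le_mul_left this hU
  have h4 : 4 * (N * T) ≤ 3 * (N * T) := by
    calc 4 * (N * T) ≤ 4 * (q * X) := by linarith
      _ ≤ 4 * (q * (B * T + N * a + N * b)) := by gcongr
      _ = (4 * q * B) * T + N * (4 * q * a) + N * (4 * q * b) := by ring
      _ ≤ N * T + N * T + N * T := by gcongr
      _ = _ := by ring
  have : 0 < N * T := by positivity
  linarith

lemma cover {V : Type} [Fintype V] (𝓕 : Finset (Σ k : ℕ, SimpleGraph (Fin k)))
    (k : ℕ) (hk : ∀ p ∈ 𝓕, p.1 ≤ k) (d : ℕ)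
    (hd : ∀ (N s : ℕ) (Γ : SimpleGraph (Fin N ⊕ Fin s)) (I : Finset (Fin N)),
    (∀ p ∈ (𝓕 : Set (Σ k : ℕ, SimpleGraph (Fin k))), IsEmpty (p.2 ↪g Γ)) →
    (∀ i ∈ I, ∀ j ∈ I, i ≠ j → ∃ a : Fin s, ¬ (Γ.Adj (Sum.inl i) (Sum.inr a) ↔ Γ.Adj (Sum.inl j) (Sum.inr a))) →
    #I ≤ (s + 1) ^ d)
    (G : SimpleGraph V) (hV : 0 < Fintype.card V) (q u N Q : ℕ) (hq : 1 ≤ q) (hN : 1 ≤ N) (hQ : 1 ≤ Q)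
    (h1 : 4 * q * (q * u + 1) ^ d ≤ N) (h2 : 4 * q * (#𝓕 * (N + q * u) ^ k) ≤ Q) (h3 : 4 * q * N ^ 2 ≤ 2 ^ u)
    (hfew : FewC (𝓕 : Set _) G Q) :
    ∃ i : Fin N, ∃ z : {j : Fin N // j ≠ i} → V,
      q * #{x : V | ∀ j, Fintype.card V < q * #(dif G x (z j))} ≤ Fintype.card V := by
  by_contra hcon
  push Not at hcon
  set n := Fintype.card V with hn
  set s := q * u with hs
  let far : V → V → Prop := fun x y => n < q * #(dif G x y)
  let Ω := Fin N ⊕ Fin s → V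
  let iso : Ω → Finset (Fin N) := fun x => {i | ∀ j, j ≠ i → far (x (Sum.inl i)) (x (Sum.inl j))}
  let bad1 : Finset Ω := {x | ∃ p ∈ 𝓕, Nonempty (p.2 ↪g G.comap x)}
  let bad2 : Finset Ω := {x | ∃ i j, far (x (Sum.inl i)) (x (Sum.inl j)) ∧
    ∀ a, x (Sum.inr a) ∉ dif G (x (Sum.inl i)) (x (Sum.inl j))}
  have hb1 : (Q : ℝ) * #bad1 ≤ #𝓕 * ((N + s : ℕ) : ℝ) ^ k * (n:ℝ) ^ (N + s) := by
    have := copies_bound (ι := Fin N ⊕ Fin s) 𝓕 k hk G Q 1 hfew (fun _ => Finset.univ) (by simp) (by simp; omega) hV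
    simpa [bad1, Finset.card_univ, ← hn] using this
  have hb2 : (#bad2 : ℝ) * 2 ^ u ≤ N ^ 2 * (n:ℝ) ^ (N + s) := by
    have hsub : bad2 ⊆ (Finset.univ : Finset (Fin N × Fin N)).biUnion fun ij =>
        {x | far (x (Sum.inl ij.1)) (x (Sum.inl ij.2)) ∧
          ∀ a, x (Sum.inr a) ∉ dif G (x (Sum.inl ij.1)) (x (Sum.inl ij.2))} := by
      intro x hx
      simp only [bad2, Finset.mem_filter, Finset.mem_univ, true_and] at hx
      obtain ⟨i, j, h⟩ := hx
      simp only [Finset.mem_biUnion, Finset.mem_filter, Finset.mem_univ, true_and]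
      exact ⟨(i, j), h⟩
    have hone : ∀ i j : Fin N, (#{x : Ω | far (x (Sum.inl i)) (x (Sum.inl j)) ∧
          ∀ a, x (Sum.inr a) ∉ dif G (x (Sum.inl i)) (x (Sum.inl j))} : ℝ) * 2 ^ u ≤ (n:ℝ) ^ (N + s) := by
      intro i j
      have e : #{x : Ω | far (x (Sum.inl i)) (x (Sum.inl j)) ∧
          ∀ a, x (Sum.inr a) ∉ dif G (x (Sum.inl i)) (x (Sum.inl j))} =
          ∑ y : Fin N → V, #{z : Fin s → V | far (y i) (y j) ∧ ∀ a, z a ∉ dif G (y i) (y j)} := by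
        simp only [Finset.card_filter]
        rw [← Fintype.sum_prod_type']
        exact Fintype.sum_equiv (Equiv.sumArrowEquivProdArrow _ _ _) _ _ (fun x => rfl)
      rw [e]
      push_cast
      rw [Finset.sum_mul]
      calc _ ≤ ∑ y : Fin N → V, (n:ℝ) ^ s := by
            apply Finset.sum_le_sum
            intro y _
            by_cases hf : far (y i) (y j)
            · have := unsep_count (dif G (y i) (y j)) q u hq hf
              simpa [hf] using this
            · simp [hf]
        _ = _ := by
            rw [Finset.sum_const, nsmul_eq_mul, Finset.card_univ]
            simp [← hn, pow_add]
    have : (#bad2 : ℝ) ≤ ∑ ij : Fin N × Fin N, (#{x : Ω | far (x (Sum.inl ij.1)) (x (Sum.inl ij.2)) ∧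
          ∀ a, x (Sum.inr a) ∉ dif G (x (Sum.inl ij.1)) (x (Sum.inl ij.2))} : ℝ) := by
      exact_mod_cast (Finset.card_le_card hsub).trans Finset.card_biUnion_le
    calc _ ≤ _ := mul_le_mul_of_nonneg_right this (by positivity)
      _ ≤ ∑ ij : Fin N × Fin N, (n:ℝ) ^ (N + s) := by
        rw [Finset.sum_mul]
        exact Finset.sum_le_sum fun ij _ => hone ij.1 ij.2
      _ = _ := by
        rw [Finset.sum_const, nsmul_eq_mul, Finset.card_univ]
        simp [pow_two]
  -- lower bound
  have hlow : (N : ℝ) * (n:ℝ) ^ (N + s) ≤ q * ∑ x : Ω, (#(iso x) : ℝ) := by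
    have hi : ∀ i : Fin N, n ^ (N + s) ≤ q * #{x : Ω | i ∈ iso x} := by
      intro i
      have e : #{x : Ω | i ∈ iso x} = ∑ w : ({j : Fin N // j ≠ i} → V), #{x : V | ∀ j, far x (w j)} * n ^ s := by
        have e1 : #{x : Ω | i ∈ iso x} = ∑ y : Fin N → V, ∑ z : Fin s → V,
            if (∀ j, j ≠ i → far (y i) (y j)) then 1 else 0 := by
          simp only [Finset.card_filter, iso, Finset.mem_filter, Finset.mem_univ, true_and]
          rw [← Fintype.sum_prod_type']
          exact Fintype.sum_equiv (Equiv.sumArrowEquivProdArrow _ _ _) _ _ (fun x => rfl)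
        rw [e1]
        have e2 : ∀ y : Fin N → V, (∑ z : Fin s → V, if (∀ j, j ≠ i → far (y i) (y j)) then 1 else 0)
            = (if (∀ j, j ≠ i → far (y i) (y j)) then 1 else 0) * n ^ s := by
          intro y; simp [← hn, mul_comm]
        simp only [e2]
        rw [← Finset.sum_mul, ← Finset.sum_mul]
        congr 1
        simp only [Finset.card_filter]
        rw [Finset.sum_comm, ← Fintype.sum_prod_type']
        apply Fintype.sum_equiv (Equiv.funSplitAt i V)
        intro y
        simp [Equiv.funSplitAt]
      rw [e, Finset.mul_sum]
      calc n ^ (N + s) = ∑ w : ({j : Fin N // j ≠ i} → V), n * n ^ s := by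
            rw [Finset.sum_const, Finset.card_univ, Fintype.card_fun, Fintype.card_subtype_compl]
            simp only [Fintype.card_fin, Fintype.card_subtype_eq, smul_eq_mul, ← hn]
            rw [← mul_assoc, ← pow_succ, Nat.sub_add_cancel hN, pow_add]
        _ ≤ _ := by
            apply Finset.sum_le_sum
            intro w _
            rw [← mul_assoc]
            exact Nat.mul_le_mul_right _ (hcon i w).le
    have hsw : ∑ x : Ω, #(iso x) = ∑ i : Fin N, #{x : Ω | i ∈ iso x} := by
      have := Finset.sum_card_bipartiteAbove_eq_sum_card_bipartiteBelow (s := (Finset.univ : Finset Ω)) (t := (Finset.univ : Finset (Fin N))) (fun x i => i ∈ iso x)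
      simpa [Finset.bipartiteAbove, Finset.bipartiteBelow] using this
    have : N * n ^ (N + s) ≤ q * ∑ x : Ω, #(iso x) := by
      rw [hsw, Finset.mul_sum]
      calc N * n ^ (N + s) = ∑ i : Fin N, n ^ (N + s) := by simp
        _ ≤ _ := Finset.sum_le_sum fun i _ => hi i
    exact_mod_cast this
  -- upper bound
  have hup : ∑ x : Ω, (#(iso x) : ℝ) ≤ ((s + 1) ^ d : ℕ) * (n:ℝ) ^ (N + s) + N * #bad1 + N * #bad2 := by
    have hx : ∀ x : Ω, (#(iso x) : ℝ) ≤ ((s + 1) ^ d : ℕ) + N * (if x ∈ bad1 then 1 else 0) + N * (if x ∈ bad2 then 1 else 0) := by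
      intro x
      have hN' : (#(iso x) : ℝ) ≤ N := by
        have := Finset.card_le_univ (iso x)
        simp only [Fintype.card_fin] at this
        exact_mod_cast this
      have h0 : (0:ℝ) ≤ ((s + 1) ^ d : ℕ) := by positivity
      by_cases hx1 : x ∈ bad1
      · simp only [hx1, if_true]; split_ifs <;> nlinarith
      by_cases hx2 : x ∈ bad2
      · simp only [hx2, if_true]; split_ifs <;> nlinarith
      simp only [hx1, hx2, if_false, mul_zero, add_zero]
      norm_cast
      apply hd N s (G.comap x) (iso x)
      · intro p hp
        by_contra hne
        apply hx1
        simp only [bad1, Finset.mem_filter, Finset.mem_univ, true_and]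
        exact ⟨p, hp, not_isEmpty_iff.1 hne⟩
      · intro i hi j hj hij
        simp only [iso, Finset.mem_filter, Finset.mem_univ, true_and] at hi
        have hf := hi j hij.symm
        by_contra hno
        push Not at hno
        apply hx2
        simp only [bad2, Finset.mem_filter, Finset.mem_univ, true_and]
        refine ⟨i, j, hf, fun a => ?_⟩
        have := hno a
        simp only [SimpleGraph.comap_adj] at this
        simp [dif, this]
    calc _ ≤ _ := Finset.sum_le_sum fun x _ => hx x
      _ = _ := by
        rw [Finset.sum_add_distrib, Finset.sum_add_distrib, ← Finset.mul_sum, ← Finset.mul_sum]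
        rw [Finset.sum_boole, Finset.sum_boole]
        simp [Ω, ← hn, mul_comm]
  have hT : 0 < (n:ℝ) ^ (N + s) := by positivity
  generalize (n:ℝ) ^ (N + s) = T at *
  have h1' : 4 * (q:ℝ) * (((s + 1) ^ d : ℕ) : ℝ) ≤ N := by exact_mod_cast h1
  have h2' : 4 * (q:ℝ) * (#𝓕 * ((N + s : ℕ) : ℝ) ^ k) ≤ Q := by exact_mod_cast h2
  have h3' : 4 * (q:ℝ) * N ^ 2 ≤ 2 ^ u := by exact_mod_cast h3
  exact cover_arith (by exact_mod_cast hQ) (by positivity) (by exact_mod_cast hq) (by exact_mod_cast hN) hT h1' h2' h3' hb1 hb2 hlow hup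

lemma exists_pow_le_two_pow (e : ℕ) : ∃ X : ℕ, ∀ u ≥ X, u ^ e ≤ 2 ^ u := by
  have h := tendsto_pow_const_div_const_pow_of_one_lt e (r := (2:ℝ)) (by norm_num)
  have h2 := (h.eventually (gt_mem_nhds (zero_lt_one (α := ℝ))))
  obtain ⟨X, hX⟩ := Filter.eventually_atTop.1 h2
  refine ⟨X, fun u hu => ?_⟩
  have := hX u hu
  rw [div_lt_one (by positivity)] at this
  exact_mod_cast this.le

lemma const_le_pow (A q : ℕ) (hq : 2 ≤ q) : A ≤ q ^ A :=
  (Nat.lt_two_pow_self (n := A)).le.trans (Nat.pow_le_pow_left hq A)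

lemma mod_fiber (n L : ℕ) (hL : 0 < L) (c : ℕ) : #{x : Fin n | x.val % L = c} ≤ n / L + 1 := by
  rw [← Finset.card_range (n / L + 1)]
  apply Finset.card_le_card_of_injOn (fun x => x.val / L)
  · intro x hx
    simp only [Finset.coe_range, Set.mem_Iio]
    exact Nat.lt_succ_of_le (Nat.div_le_div_right x.2.le)
  · intro x hx y hy hxy
    simp only [Finset.coe_filter, Finset.mem_univ, true_and, Set.mem_ofPred_eq] at hx hy
    apply Fin.ext
    simp only at hxy
    rw [← Nat.div_add_mod x.val L, ← Nat.div_add_mod y.val L, hxy, hx, hy]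

/-- the clustering conclusion -/
structure Clus {n : ℕ} (G : SimpleGraph (Fin n)) (q W : ℕ) (ι : Type) (φ : Fin n → ι) (E : Finset (Fin n)) : Prop where
  hE : q * #E ≤ n
  big : ∀ i, n ≤ W * #{x | x ∉ E ∧ φ x = i}
  small : ∀ i, q * #{x | x ∉ E ∧ φ x = i} ≤ n
  close : ∀ x y, x ∉ E → y ∉ E → φ x = φ y → q * #(dif G x y) ≤ n

lemma clus_of_cover {n : ℕ} (G : SimpleGraph (Fin n)) (q N : ℕ) (hq : 1 ≤ q) (hN : 1 ≤ N) (hn : 2 * q ≤ n)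
    (hcov : ∃ i : Fin N, ∃ z : {j : Fin N // j ≠ i} → Fin n,
      (4 * q) * #{x : Fin n | ∀ j, n < (4 * q) * #(dif G x (z j))} ≤ n) :
    ∃ (ι : Type) (_ : Fintype ι) (φ : Fin n → ι) (E : Finset (Fin n)),
      Clus G q (8 * q ^ 2 * N) ι φ E := by
  obtain ⟨i, z, hz⟩ := hcov
  set E0 : Finset (Fin n) := {x : Fin n | ∀ j, n < (4 * q) * #(dif G x (z j))} with hE0
  have hc : ∀ x : Fin n, ∃ o : Option {j : Fin N // j ≠ i}, x ∉ E0 → ∃ j, o = some j ∧ (4 * q) * #(dif G x (z j)) ≤ n := by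
    intro x
    by_cases hx : x ∈ E0
    · exact ⟨none, fun h => absurd hx h⟩
    · simp only [hE0, Finset.mem_filter, Finset.mem_univ, true_and, not_forall, not_lt] at hx
      obtain ⟨j, hj⟩ := hx
      exact ⟨some j, fun _ => ⟨j, rfl, hj⟩⟩
  choose o ho using hc
  have hL : 0 < 2 * q := by omega
  let lam : Fin n → Option {j : Fin N // j ≠ i} × Fin (2 * q) := fun x => (o x, ⟨x.val % (2 * q), Nat.mod_lt _ hL⟩)
  set W := 8 * q ^ 2 * N with hW
  let cls : Option {j : Fin N // j ≠ i} × Fin (2 * q) → Finset (Fin n) := fun a => {x | x ∉ E0 ∧ lam x = a}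
  let Big : Option {j : Fin N // j ≠ i} × Fin (2 * q) → Prop := fun a => n ≤ W * #(cls a)
  set E1 : Finset (Fin n) := {x | x ∉ E0 ∧ ¬ Big (lam x)} with hE1
  have hcard : Fintype.card (Option {j : Fin N // j ≠ i} × Fin (2 * q)) = N * (2 * q) := by
    rw [Fintype.card_prod, Fintype.card_option, Fintype.card_subtype_compl]
    simp only [Fintype.card_fin, Fintype.card_subtype_eq]
    rw [Nat.sub_add_cancel hN]
  have hE1c : W * #E1 ≤ (N * (2 * q)) * n := by
    have hsub : E1 ⊆ (Finset.univ.filter fun a => ¬ Big a).biUnion cls := by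
      intro x hx
      simp only [hE1, Finset.mem_filter, Finset.mem_univ, true_and] at hx
      simp only [Finset.mem_biUnion, Finset.mem_filter, Finset.mem_univ, true_and, cls]
      exact ⟨lam x, hx.2, hx.1, rfl⟩
    calc W * #E1 ≤ W * ∑ a with ¬ Big a, #(cls a) := Nat.mul_le_mul_left _ ((Finset.card_le_card hsub).trans Finset.card_biUnion_le)
      _ = ∑ a with ¬ Big a, W * #(cls a) := Finset.mul_sum _ _ _
      _ ≤ ∑ a with ¬ Big a, n := by
        apply Finset.sum_le_sum
        intro a ha
        simp only [Finset.mem_filter, Finset.mem_univ, true_and, Big, not_le] at ha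
        exact ha.le
      _ ≤ ∑ a : Option {j : Fin N // j ≠ i} × Fin (2 * q), n := Finset.sum_le_sum_of_subset (Finset.filter_subset _ _)
      _ = _ := by rw [Finset.sum_const, Finset.card_univ, hcard, smul_eq_mul]
  have hE1c' : 4 * q * #E1 ≤ n := by
    have h2 : (2 * q * N) * (4 * q * #E1) ≤ (2 * q * N) * n := by
      calc (2 * q * N) * (4 * q * #E1) = W * #E1 := by rw [hW]; ring
        _ ≤ _ := hE1c
        _ = _ := by ring
    exact Nat.le_of_mul_le_mul_left h2 (by positivity)
  have hEc : 2 * (q * #(E0 ∪ E1)) ≤ n := by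
    have := Finset.card_union_le E0 E1
    nlinarith
  have hex : ∃ x, x ∉ E0 ∪ E1 := by
    by_contra hcon
    push Not at hcon
    have h3 : E0 ∪ E1 = Finset.univ := by ext x; simp only [hcon x, Finset.mem_univ]
    rw [h3, Finset.card_univ, Fintype.card_fin] at hEc
    nlinarith
  have hbig : ∀ x, x ∉ E0 ∪ E1 → Big (lam x) := by
    intro x hx
    simp only [hE1, Finset.mem_union, Finset.mem_filter, Finset.mem_univ, true_and] at hx
    tauto
  obtain ⟨x0, hx0⟩ := hex
  let φ : Fin n → {a // Big a} := fun x => if h : Big (lam x) then ⟨lam x, h⟩ else ⟨lam x0, hbig x0 hx0⟩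
  have hφ : ∀ x, x ∉ E0 ∪ E1 → (φ x).1 = lam x := by
    intro x hx
    simp only [φ, hbig x hx, dif_pos]
  have hset : ∀ a : {a // Big a}, ({x | x ∉ E0 ∪ E1 ∧ φ x = a} : Finset (Fin n)) = cls a.1 := by
    intro a
    ext x
    simp only [cls, Finset.mem_filter, Finset.mem_univ, true_and]
    constructor
    · rintro ⟨h1, h2⟩
      refine ⟨fun h => h1 (Finset.mem_union_left _ h), ?_⟩
      rw [← hφ x h1, h2]
    · rintro ⟨h1, h2⟩
      have hb : Big (lam x) := by rw [h2]; exact a.2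
      have hx : x ∉ E0 ∪ E1 := by
        simp only [hE1, Finset.mem_union, Finset.mem_filter, Finset.mem_univ, true_and]
        tauto
      exact ⟨hx, Subtype.ext (by rw [hφ x hx, h2])⟩
  refine ⟨{a // Big a}, inferInstance, φ, E0 ∪ E1, ⟨by omega, ?_, ?_, ?_⟩⟩
  · intro a
    refine le_trans a.2 (le_of_eq ?_)
    congr 1
    rw [← hset a]
    congr!
  · intro a
    have hca : #({x | x ∉ E0 ∪ E1 ∧ φ x = a} : Finset (Fin n)) = #(cls a.1) := congrArg Finset.card (hset a)
    suffices hh : q * #(cls a.1) ≤ n by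
      refine le_trans (le_of_eq ?_) hh
      rw [← hca]
      congr!
    have h1 : #(cls a.1) ≤ n / (2 * q) + 1 := by
      refine le_trans (Finset.card_le_card ?_) (mod_fiber n (2 * q) hL a.1.2.val)
      intro x hx
      simp only [cls, Finset.mem_filter, Finset.mem_univ, true_and] at hx ⊢
      rw [← hx.2]
    have h2 : (2 * q) * (n / (2 * q)) ≤ n := Nat.mul_div_le _ _
    nlinarith
  · intro x y hx hy hxy
    have h1 : lam x = lam y := by rw [← hφ x hx, ← hφ y hy, hxy]
    have hx0 : x ∉ E0 := fun h => hx (Finset.mem_union_left _ h)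
    have hy0 : y ∉ E0 := fun h => hy (Finset.mem_union_left _ h)
    obtain ⟨j, hj, hj2⟩ := ho x hx0
    obtain ⟨j', hj', hj2'⟩ := ho y hy0
    have : o x = o y := congrArg Prod.fst h1
    rw [hj, hj'] at this
    obtain rfl := Option.some.inj this
    have h3 := dif_tri G x y (z j)
    rw [dif_comm G (z j) y] at h3
    nlinarith

lemma cluster (𝓕 : Finset (Σ k : ℕ, SimpleGraph (Fin k)))
    (k : ℕ) (hk : ∀ p ∈ 𝓕, p.1 ≤ k) (d : ℕ)
    (hd : ∀ (N s : ℕ) (Γ : SimpleGraph (Fin N ⊕ Fin s)) (I : Finset (Fin N)),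
    (∀ p ∈ (𝓕 : Set (Σ k : ℕ, SimpleGraph (Fin k))), IsEmpty (p.2 ↪g Γ)) →
    (∀ i ∈ I, ∀ j ∈ I, i ≠ j → ∃ a : Fin s, ¬ (Γ.Adj (Sum.inl i) (Sum.inr a) ↔ Γ.Adj (Sum.inl j) (Sum.inr a))) →
    #I ≤ (s + 1) ^ d) :
    ∃ C : ℕ, ∀ q : ℕ, 2 ≤ q → ∀ n : ℕ, q ^ C ≤ n → ∀ G : SimpleGraph (Fin n), FewC (𝓕 : Set _) G (q ^ C) →
      ∃ (ι : Type) (_ : Fintype ι) (φ : Fin n → ι) (E : Finset (Fin n)), Clus G q (q ^ C) ι φ E := by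
  obtain ⟨X, hX⟩ := exists_pow_le_two_pow (6 * d + 6)
  set A := 4 * (X + 4) with hA
  set C := (A + 1) * (3 * d + 4 + (3 * d + 3) * k) + #𝓕 with hC
  refine ⟨C, fun q hq n hn G hfew => ?_⟩
  set u := A * q with hu
  have huA : A ≤ u := Nat.le_mul_of_pos_right _ (by omega)
  have hu4 : 4 * (4 * q) ≤ u := by rw [hu]; nlinarith
  have hu2 : 4 * (4 * q) ≤ u ^ 2 := by nlinarith
  have huq : u ≤ q ^ (A + 1) := by
    rw [hu, pow_succ]; exact Nat.mul_le_mul_right _ (const_le_pow A q hq)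
  have hu1 : 1 ≤ u := by omega
  set N := u ^ (3 * d + 2) with hN
  have hN1 : 1 ≤ N := Nat.one_le_pow _ _ hu1
  have hsu : 4 * q * u + 1 ≤ u ^ 3 := by
    have : 4 * q * u ≤ u ^ 2 := by nlinarith
    have h2 : u ^ 3 = u * u ^ 2 := by ring
    have h3 : 1 ≤ u ^ 2 := Nat.one_le_pow _ _ hu1
    nlinarith
  have h1 : 4 * (4 * q) * (4 * q * u + 1) ^ d ≤ N := by
    calc 4 * (4 * q) * (4 * q * u + 1) ^ d ≤ u ^ 2 * (u ^ 3) ^ d := by gcongr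
      _ = N := by rw [hN, ← pow_mul, ← pow_add]; ring_nf
  have h3 : 4 * (4 * q) * N ^ 2 ≤ 2 ^ u := by
    calc 4 * (4 * q) * N ^ 2 ≤ u ^ 2 * N ^ 2 := by gcongr
      _ = u ^ (6 * d + 6) := by rw [hN, ← pow_mul, ← pow_add]; ring_nf
      _ ≤ 2 ^ u := hX u (by omega)
  have hNs : N + 4 * q * u ≤ u ^ (3 * d + 3) := by
    have : 4 * q * u ≤ u ^ (3 * d + 2) := by
      calc 4 * q * u ≤ u ^ 2 := by nlinarith
        _ ≤ u ^ (3 * d + 2) := Nat.pow_le_pow_right hu1 (by omega)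
    rw [pow_succ, ← hN]
    nlinarith
  have h2 : 4 * (4 * q) * (#𝓕 * (N + 4 * q * u) ^ k) ≤ q ^ C := by
    calc 4 * (4 * q) * (#𝓕 * (N + 4 * q * u) ^ k) ≤ u ^ 2 * (q ^ #𝓕 * (u ^ (3 * d + 3)) ^ k) := by
          gcongr
          exact const_le_pow _ q hq
      _ = u ^ (2 + (3 * d + 3) * k) * q ^ #𝓕 := by rw [← pow_mul, pow_add]; ring
      _ ≤ (q ^ (A + 1)) ^ (2 + (3 * d + 3) * k) * q ^ #𝓕 := by gcongr
      _ = q ^ ((A + 1) * (2 + (3 * d + 3) * k) + #𝓕) := by rw [← pow_mul, ← pow_add]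
      _ ≤ q ^ C := by
          apply Nat.pow_le_pow_right (by omega)
          rw [hC]
          gcongr
          omega
  have hW : 8 * q ^ 2 * N ≤ q ^ C := by
    calc 8 * q ^ 2 * N ≤ u ^ 2 * N := by gcongr; nlinarith
      _ = u ^ (3 * d + 4) := by rw [hN, ← pow_add]; ring_nf
      _ ≤ (q ^ (A + 1)) ^ (3 * d + 4) := by gcongr
      _ = q ^ ((A + 1) * (3 * d + 4)) := by rw [← pow_mul]
      _ ≤ q ^ C := by
          apply Nat.pow_le_pow_right (by omega)
          rw [hC]
          refine le_trans ?_ (Nat.le_add_right _ _)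
          exact Nat.mul_le_mul_left _ (Nat.le_add_right _ _)
  have hn2 : 2 * q ≤ n := by
    refine le_trans ?_ hn
    refine le_trans ?_ hW
    nlinarith
  have hcov := cover 𝓕 k hk d hd G (by simp; omega) (4 * q) u N (q ^ C) (by omega) hN1
    (Nat.one_le_pow _ _ (by omega)) h1 h2 h3 hfew
  simp only [Fintype.card_fin] at hcov
  obtain ⟨ι, hι, φ, E, hcl⟩ := clus_of_cover G q N (by omega) hN1 hn2 hcov
  exact ⟨ι, hι, φ, E, ⟨hcl.hE, fun i => (hcl.big i).trans (Nat.mul_le_mul_right _ hW), hcl.small, hcl.close⟩⟩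

lemma first_moment {ι V : Type*} [Fintype ι] [DecidableEq ι] (S : ι → Finset V) (hS : ∀ i, (S i).Nonempty)
    (g : ι → ι → V → V → ℝ) (hg : ∀ i j a b, 0 ≤ g i j a b) (hg0 : ∀ i a b, g i i a b = 0)
    (h : (ι → V) → ℝ) (η : ℝ) (hh : ∑ x ∈ Fintype.piFinset S, h x ≤ η * ∏ a, (#(S a) : ℝ))
    (hsum : ∑ i, ∑ j, (∑ a ∈ S i, ∑ b ∈ S j, g i j a b) / ((#(S i) : ℝ) * #(S j)) + η < 1) :
    ∃ x ∈ Fintype.piFinset S, ∑ i, ∑ j, g i j (x i) (x j) + h x < 1 := by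
  by_contra hcon
  push Not at hcon
  have hpos : ∀ i, (0:ℝ) < #(S i) := fun i => by exact_mod_cast (hS i).card_pos
  have hP : (0:ℝ) < ∏ a, (#(S a) : ℝ) := Finset.prod_pos (fun i _ => hpos i)
  have h1 : ∏ a, (#(S a) : ℝ) ≤ ∑ x ∈ Fintype.piFinset S, (∑ i, ∑ j, g i j (x i) (x j) + h x) := by
    calc ∏ a, (#(S a) : ℝ) = ∑ x ∈ Fintype.piFinset S, (1:ℝ) := by
          simp [Fintype.card_piFinset]
      _ ≤ _ := Finset.sum_le_sum hcon
  have h2 : ∀ i j, ∑ x ∈ Fintype.piFinset S, g i j (x i) (x j) ≤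
      (∑ a ∈ S i, ∑ b ∈ S j, g i j a b) / ((#(S i) : ℝ) * #(S j)) * ∏ a, (#(S a) : ℝ) := by
    intro i j
    by_cases hij : i = j
    · subst hij
      simp [hg0]
    · have := pi_sum_two S i j hij (g i j) (hg i j)
      rw [div_mul_eq_mul_div, le_div_iff₀ (mul_pos (hpos i) (hpos j))]
      exact this
  have h3 : ∑ x ∈ Fintype.piFinset S, (∑ i, ∑ j, g i j (x i) (x j) + h x) ≤
      (∑ i, ∑ j, (∑ a ∈ S i, ∑ b ∈ S j, g i j a b) / ((#(S i) : ℝ) * #(S j)) + η) * ∏ a, (#(S a) : ℝ) := by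
    rw [Finset.sum_add_distrib, add_mul]
    refine add_le_add ?_ hh
    rw [Finset.sum_comm, Finset.sum_mul]
    refine Finset.sum_le_sum fun i _ => ?_
    rw [Finset.sum_comm, Finset.sum_mul]
    exact Finset.sum_le_sum fun j _ => h2 i j
  nlinarith

/-- the class of `a` outside the exceptional set -/
def ccl {n : ℕ} {ι : Type} (φ : Fin n → ι) (E : Finset (Fin n)) (a : Fin n) : Finset (Fin n) :=
  {x | x ∉ E ∧ φ x = φ a}

lemma mem_ccl {n : ℕ} {ι : Type} {φ : Fin n → ι} {E : Finset (Fin n)} {a x : Fin n} :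
    x ∈ ccl φ E a ↔ x ∉ E ∧ φ x = φ a := by simp [ccl]

lemma ccl_sum {n : ℕ} {ι : Type} (φ : Fin n → ι) (E : Finset (Fin n)) (B D : Finset (Fin n))
    (hB : ∀ b ∈ B, b ∉ E) :
    ∑ b ∈ B, (∑ w ∈ ccl φ E b, if w ∈ D then (1:ℝ) else 0) / #(ccl φ E b) ≤ #D := by
  have h1 : ∀ b ∈ B, (∑ w ∈ ccl φ E b, if w ∈ D then (1:ℝ) else 0) / #(ccl φ E b) =
      ∑ z ∈ D, if z ∈ ccl φ E b then 1 / (#(ccl φ E z) : ℝ) else 0 := by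
    intro b hb
    have : ∀ z ∈ D, (if z ∈ ccl φ E b then 1 / (#(ccl φ E z) : ℝ) else 0) =
        (if z ∈ ccl φ E b then 1 else 0) / (#(ccl φ E b) : ℝ) := by
      intro z hz
      split_ifs with hh
      · have : ccl φ E z = ccl φ E b := by
          ext x; rw [mem_ccl, mem_ccl, (mem_ccl.1 hh).2]
        rw [this]
      · simp
    rw [Finset.sum_congr rfl this, ← Finset.sum_div]
    congr 1
    rw [← Finset.sum_filter, ← Finset.sum_filter, Finset.filter_mem_eq_inter, Finset.filter_mem_eq_inter,
      Finset.inter_comm]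
  rw [Finset.sum_congr rfl h1, Finset.sum_comm]
  have h2 : ∀ z ∈ D, ∑ b ∈ B, (if z ∈ ccl φ E b then 1 / (#(ccl φ E z) : ℝ) else 0) ≤ 1 := by
    intro z hz
    rw [← Finset.sum_filter, Finset.sum_const, nsmul_eq_mul, mul_one_div]
    apply div_le_one_of_le₀ _ (Nat.cast_nonneg _)
    refine Nat.cast_le.2 (Finset.card_le_card ?_)
    intro b hb
    rw [Finset.mem_filter, mem_ccl] at hb
    exact mem_ccl.2 ⟨hB b hb.1, hb.2.2.symm⟩
  calc _ ≤ ∑ z ∈ D, (1:ℝ) := Finset.sum_le_sum h2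
    _ = _ := by simp

/-- mismatch density -/
def mis {n : ℕ} {ι : Type} (G : SimpleGraph (Fin n)) (φ : Fin n → ι) (E : Finset (Fin n)) (a b : Fin n) : ℝ :=
  (∑ w ∈ ccl φ E a, ∑ w' ∈ ccl φ E b, if (G.Adj w w' ↔ G.Adj a b) then (0:ℝ) else 1) /
    ((#(ccl φ E a) : ℝ) * #(ccl φ E b))

lemma mis_nonneg {n : ℕ} {ι : Type} (G : SimpleGraph (Fin n)) (φ : Fin n → ι) (E : Finset (Fin n)) (a b : Fin n) :
    0 ≤ mis G φ E a b := by
  unfold mis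
  refine div_nonneg (Finset.sum_nonneg fun _ _ => Finset.sum_nonneg fun _ _ => ?_) (by positivity)
  split_ifs <;> norm_num

lemma mis_sum {n : ℕ} {ι : Type} (G : SimpleGraph (Fin n)) (q W : ℕ) (hq : 0 < q) (φ : Fin n → ι) (E : Finset (Fin n))
    (hcl : Clus G q W ι φ E) (A B : Finset (Fin n)) (hA : ∀ a ∈ A, a ∉ E) (hB : ∀ a ∈ B, a ∉ E) :
    ∑ a ∈ A, ∑ b ∈ B, mis G φ E a b ≤ ((#A : ℝ) + #B) * ((n : ℝ) / q) := by
  have hself : ∀ a, a ∉ E → (0:ℝ) < #(ccl φ E a) := fun a ha => by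
    have : (ccl φ E a).Nonempty := ⟨a, mem_ccl.2 ⟨ha, rfl⟩⟩
    exact_mod_cast this.card_pos
  have hq' : (0:ℝ) < q := by exact_mod_cast hq
  have hdif : ∀ x a, x ∈ ccl φ E a → a ∉ E → (#(dif G x a) : ℝ) ≤ n / q := by
    intro x a hx ha
    have := hcl.close x a (mem_ccl.1 hx).1 ha (mem_ccl.1 hx).2
    rw [le_div_iff₀ hq', mul_comm]
    exact_mod_cast this
  have h0 : ∀ a ∈ A, ∀ b ∈ B, mis G φ E a b ≤
      (∑ w ∈ ccl φ E a, (∑ w' ∈ ccl φ E b, if w' ∈ dif G w a then (1:ℝ) else 0) / #(ccl φ E b)) / #(ccl φ E a)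
      + (∑ w' ∈ ccl φ E b, if a ∈ dif G w' b then (1:ℝ) else 0) / #(ccl φ E b) := by
    intro a ha b hb
    have ha' := hself a (hA a ha)
    have hb' := hself b (hB b hb)
    have e1 : (∑ w' ∈ ccl φ E b, if a ∈ dif G w' b then (1:ℝ) else 0) / #(ccl φ E b) =
       (∑ w ∈ ccl φ E a, ∑ w' ∈ ccl φ E b, if a ∈ dif G w' b then (1:ℝ) else 0) / ((#(ccl φ E a) : ℝ) * #(ccl φ E b)) := by
      rw [Finset.sum_const, nsmul_eq_mul, mul_div_mul_left _ _ ha'.ne']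
    have e2 : (∑ w ∈ ccl φ E a, (∑ w' ∈ ccl φ E b, if w' ∈ dif G w a then (1:ℝ) else 0) / #(ccl φ E b)) / #(ccl φ E a)
       = (∑ w ∈ ccl φ E a, ∑ w' ∈ ccl φ E b, if w' ∈ dif G w a then (1:ℝ) else 0) / ((#(ccl φ E a) : ℝ) * #(ccl φ E b)) := by
      rw [← Finset.sum_div, div_div, mul_comm]
    rw [e1, e2, ← add_div, mis]
    refine div_le_div_of_nonneg_right ?_ (by positivity)
    rw [← Finset.sum_add_distrib]
    refine Finset.sum_le_sum fun w _ => ?_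
    rw [← Finset.sum_add_distrib]
    refine Finset.sum_le_sum fun w' _ => ?_
    simp only [dif, Finset.mem_filter, Finset.mem_univ, true_and]
    have c1 := G.adj_comm w' a
    have c2 := G.adj_comm b a
    by_cases p1 : G.Adj w w' <;> by_cases p2 : G.Adj a b <;> by_cases p3 : G.Adj a w' <;>
      simp [p1, p2, p3, c1, c2]
  have h1 : ∑ a ∈ A, ∑ b ∈ B, (∑ w ∈ ccl φ E a, (∑ w' ∈ ccl φ E b, if w' ∈ dif G w a then (1:ℝ) else 0) / #(ccl φ E b)) / #(ccl φ E a)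
      ≤ #A * ((n:ℝ) / q) := by
    have : ∀ a ∈ A, ∑ b ∈ B, (∑ w ∈ ccl φ E a, (∑ w' ∈ ccl φ E b, if w' ∈ dif G w a then (1:ℝ) else 0) / #(ccl φ E b)) / #(ccl φ E a) ≤ (n:ℝ)/q := by
      intro a ha
      rw [← Finset.sum_div, div_le_iff₀ (hself a (hA a ha)), Finset.sum_comm, mul_comm, ← nsmul_eq_mul, ← Finset.sum_const]
      refine Finset.sum_le_sum fun w hw => ?_
      exact (ccl_sum φ E B (dif G w a) hB).trans (hdif w a hw (hA a ha))
    calc _ ≤ ∑ a ∈ A, (n:ℝ)/q := Finset.sum_le_sum this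
      _ = _ := by simp
  have h2 : ∑ a ∈ A, ∑ b ∈ B, (∑ w' ∈ ccl φ E b, if a ∈ dif G w' b then (1:ℝ) else 0) / #(ccl φ E b)
      ≤ #B * ((n:ℝ) / q) := by
    rw [Finset.sum_comm]
    have : ∀ b ∈ B, ∑ a ∈ A, (∑ w' ∈ ccl φ E b, if a ∈ dif G w' b then (1:ℝ) else 0) / #(ccl φ E b) ≤ (n:ℝ)/q := by
      intro b hb
      rw [← Finset.sum_div, div_le_iff₀ (hself b (hB b hb)), Finset.sum_comm, mul_comm, ← nsmul_eq_mul, ← Finset.sum_const]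
      refine Finset.sum_le_sum fun w hw => ?_
      refine le_trans ?_ (hdif w b hw (hB b hb))
      rw [← Finset.sum_filter, Finset.sum_const, nsmul_eq_mul, mul_one, Finset.filter_mem_eq_inter]
      exact_mod_cast Finset.card_le_card Finset.inter_subset_right
    calc _ ≤ ∑ b ∈ B, (n:ℝ)/q := Finset.sum_le_sum this
      _ = _ := by simp
  calc ∑ a ∈ A, ∑ b ∈ B, mis G φ E a b ≤ _ := Finset.sum_le_sum fun a ha => Finset.sum_le_sum fun b hb => h0 a ha b hb
    _ ≤ #A * ((n:ℝ) / q) + #B * ((n:ℝ) / q) := by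
      simp only [Finset.sum_add_distrib]
      exact add_le_add h1 h2
    _ = _ := by ring

def vcl {n : ℕ} {ι : Type} (φ : Fin n → ι) (E : Finset (Fin n)) (i : ι) : Finset (Fin n) :=
  {x | x ∉ E ∧ φ x = i}

lemma mem_vcl {n : ℕ} {ι : Type} {φ : Fin n → ι} {E : Finset (Fin n)} {i : ι} {x : Fin n} :
    x ∈ vcl φ E i ↔ x ∉ E ∧ φ x = i := by simp [vcl]

lemma vcl_sum {n : ℕ} {ι : Type} [Fintype ι] (φ : Fin n → ι) (E : Finset (Fin n)) (S : ι → Finset (Fin n))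
    (hS : ∀ i, S i ⊆ vcl φ E i) (D : Finset (Fin n)) : ∑ i, #(D ∩ S i) ≤ #D := by
  rw [← Finset.card_biUnion]
  · apply Finset.card_le_card
    intro x hx
    simp only [Finset.mem_biUnion, Finset.mem_inter] at hx
    obtain ⟨i, _, h, _⟩ := hx
    exact h
  · intro i _ j _ hij
    refine Finset.disjoint_left.2 ?_
    intro x hx hy
    apply hij
    rw [← (mem_vcl.1 (hS i (Finset.mem_inter.1 hx).2)).2, ← (mem_vcl.1 (hS j (Finset.mem_inter.1 hy).2)).2]

lemma vcl_total {n : ℕ} {ι : Type} [Fintype ι] (φ : Fin n → ι) (E : Finset (Fin n)) :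
    ∑ i, #(vcl φ E i) ≤ n := by
  have := vcl_sum φ E (vcl φ E) (fun i => subset_rfl) Finset.univ
  simpa using this

/-- the second edit cost -/
def cst {n : ℕ} {ι : Type} (G : SimpleGraph (Fin n)) (φ : Fin n → ι) (E : Finset (Fin n)) (i j : ι) (a b : Fin n) : ℝ :=
  if i = j then 0 else (#(vcl φ E j) : ℝ) * ∑ x ∈ vcl φ E i, if b ∈ dif G x a then (1:ℝ) else 0

lemma cst_nonneg {n : ℕ} {ι : Type} (G : SimpleGraph (Fin n)) (φ : Fin n → ι) (E : Finset (Fin n)) (i j : ι) (a b : Fin n) :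
    0 ≤ cst G φ E i j a b := by
  unfold cst
  split_ifs
  · exact le_rfl
  · refine mul_nonneg (Nat.cast_nonneg _) (Finset.sum_nonneg fun _ _ => ?_)
    split_ifs <;> norm_num

lemma cst_row {n : ℕ} {ι : Type} [Fintype ι] (G : SimpleGraph (Fin n)) (q W : ℕ) (hq : 0 < q) (φ : Fin n → ι) (E : Finset (Fin n))
    (hcl : Clus G q W ι φ E) (S : ι → Finset (Fin n)) (hS : ∀ i, S i ⊆ vcl φ E i) (hne : ∀ i, (S i).Nonempty)
    (h2 : ∀ i, #(vcl φ E i) ≤ 2 * #(S i)) (i : ι) :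
    ∑ j, (∑ a ∈ S i, ∑ b ∈ S j, cst G φ E i j a b) / ((#(S i) : ℝ) * #(S j)) ≤ 2 * #(vcl φ E i) * ((n:ℝ) / q) := by
  have hpos : ∀ i, (0:ℝ) < #(S i) := fun i => by exact_mod_cast (hne i).card_pos
  have hq' : (0:ℝ) < q := by exact_mod_cast hq
  have hterm : ∀ j, (∑ a ∈ S i, ∑ b ∈ S j, cst G φ E i j a b) / ((#(S i) : ℝ) * #(S j)) ≤
      (2 / #(S i)) * ∑ a ∈ S i, ∑ x ∈ vcl φ E i, (#(dif G x a ∩ S j) : ℝ) := by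
    intro j
    have e0 : 0 ≤ ∑ a ∈ S i, ∑ x ∈ vcl φ E i, (#(dif G x a ∩ S j) : ℝ) :=
      Finset.sum_nonneg fun _ _ => Finset.sum_nonneg fun _ _ => Nat.cast_nonneg _
    have e1 : ∑ a ∈ S i, ∑ b ∈ S j, cst G φ E i j a b ≤ #(vcl φ E j) * ∑ a ∈ S i, ∑ x ∈ vcl φ E i, (#(dif G x a ∩ S j) : ℝ) := by
      by_cases hij : i = j
      · simp only [cst, hij, if_true, Finset.sum_const_zero]
        rw [hij] at e0
        positivity
      · simp only [cst, hij, if_false]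
        rw [Finset.mul_sum]
        refine Finset.sum_le_sum fun a _ => ?_
        rw [← Finset.mul_sum, Finset.sum_comm]
        refine mul_le_mul_of_nonneg_left (Finset.sum_le_sum fun x _ => ?_) (Nat.cast_nonneg _)
        rw [← Finset.sum_filter, Finset.sum_const, nsmul_eq_mul, mul_one, Finset.filter_mem_eq_inter, Finset.inter_comm]
    have e2 : (#(vcl φ E j) : ℝ) ≤ 2 * #(S j) := by exact_mod_cast h2 j
    rw [div_le_iff₀ (mul_pos (hpos i) (hpos j))]
    refine e1.trans ((mul_le_mul_of_nonneg_right e2 e0).trans (le_of_eq ?_))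
    have := (hpos i).ne'
    field_simp
  calc _ ≤ ∑ j, (2 / #(S i)) * ∑ a ∈ S i, ∑ x ∈ vcl φ E i, (#(dif G x a ∩ S j) : ℝ) := Finset.sum_le_sum fun j _ => hterm j
    _ = (2 / #(S i)) * ∑ a ∈ S i, ∑ x ∈ vcl φ E i, ∑ j, (#(dif G x a ∩ S j) : ℝ) := by
      rw [← Finset.mul_sum, Finset.sum_comm]
      congr 1
      refine Finset.sum_congr rfl fun a _ => ?_
      rw [Finset.sum_comm]
    _ ≤ (2 / #(S i)) * ∑ a ∈ S i, ∑ x ∈ vcl φ E i, ((n:ℝ) / q) := by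
      refine mul_le_mul_of_nonneg_left (Finset.sum_le_sum fun a ha => Finset.sum_le_sum fun x hx => ?_) (by positivity)
      have h3 := vcl_sum φ E S hS (dif G x a)
      have ha' := mem_vcl.1 (hS i ha)
      have hx' := mem_vcl.1 hx
      have h4 := hcl.close x a hx'.1 ha'.1 (hx'.2.trans ha'.2.symm)
      rw [le_div_iff₀ hq', mul_comm]
      exact_mod_cast (Nat.mul_le_mul_left q h3).trans h4
    _ = _ := by
      have := (hpos i).ne'
      rw [Finset.sum_const, Finset.sum_const, nsmul_eq_mul, nsmul_eq_mul]
      field_simp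

lemma card_clus {n : ℕ} {ι : Type} [Fintype ι] (G : SimpleGraph (Fin n)) (q W : ℕ) (hn : 0 < n) (φ : Fin n → ι) (E : Finset (Fin n))
    (hcl : Clus G q W ι φ E) : Fintype.card ι ≤ W := by
  have h1 : Fintype.card ι * n ≤ W * n := by
    calc Fintype.card ι * n = ∑ i : ι, n := by simp
      _ ≤ ∑ i : ι, W * #(vcl φ E i) := Finset.sum_le_sum fun i _ => hcl.big i
      _ = W * ∑ i : ι, #(vcl φ E i) := by rw [Finset.mul_sum]
      _ ≤ W * n := Nat.mul_le_mul_left _ (vcl_total φ E)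
  exact Nat.le_of_mul_le_mul_right h1 hn

lemma choose_r {n : ℕ} (hn : 0 < n) (G : SimpleGraph (Fin n)) (q1 W1 : ℕ) (ι : Type) [Fintype ι] (φ : Fin n → ι)
    (E1 : Finset (Fin n)) (h1 : Clus G q1 W1 ι φ E1)
    (q2 W2 : ℕ) (ι2 : Type) (φ2 : Fin n → ι2)
    (E2 : Finset (Fin n)) (h2 : Clus G q2 W2 ι2 φ2 E2) (hq1 : 0 < q1) (T : ℕ) (hT : 1 ≤ T) (hW1 : 0 < W1)
    (hq2 : 16 * T * W1 ^ 3 ≤ q2) :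
    ∃ r : ι → Fin n, (∀ i, r i ∈ vcl φ E1 i ∧ r i ∉ E2) ∧
      ∑ i, ∑ j, cst G φ E1 i j (r i) (r j) ≤ 5 * (n:ℝ) ^ 2 / q1 ∧
      (T : ℝ) * ∑ i, ∑ j, (if i = j then 0 else mis G φ2 E2 (r i) (r j)) ≤ 1 := by
  have hq2' : 2 * W1 ≤ q2 := by
    have : W1 ≤ W1 ^ 3 := Nat.le_self_pow (by norm_num) _
    nlinarith [Nat.mul_le_mul hT this]
  set S : ι → Finset (Fin n) := fun i => vcl φ E1 i \ E2 with hS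
  have hSsub : ∀ i, S i ⊆ vcl φ E1 i := fun i => Finset.sdiff_subset
  have hSc : ∀ i, #(vcl φ E1 i) ≤ 2 * #(S i) := by
    intro i
    have a1 : #(vcl φ E1 i) ≤ #(S i) + #E2 := by
      have := Finset.le_card_sdiff E2 (vcl φ E1 i)
      simp only [hS]; omega
    have a2 : W1 * (2 * #E2) ≤ W1 * #(vcl φ E1 i) := by
      calc W1 * (2 * #E2) = 2 * W1 * #E2 := by ring
        _ ≤ q2 * #E2 := Nat.mul_le_mul_right _ hq2'
        _ ≤ n := h2.hE
        _ ≤ _ := h1.big i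
    have a3 := Nat.le_of_mul_le_mul_left a2 hW1
    omega
  have hSbig : ∀ i, n ≤ 2 * W1 * #(S i) := by
    intro i
    calc n ≤ W1 * #(vcl φ E1 i) := h1.big i
      _ ≤ W1 * (2 * #(S i)) := Nat.mul_le_mul_left _ (hSc i)
      _ = _ := by ring
  have hne : ∀ i, (S i).Nonempty := by
    intro i
    rw [← Finset.card_pos]
    have := hSbig i
    by_contra hcon
    have h0 : #(S i) = 0 := by omega
    rw [h0] at this
    omega
  have hpos : ∀ i, (0:ℝ) < #(S i) := fun i => by exact_mod_cast (hne i).card_pos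
  have hn' : (0:ℝ) < n := by exact_mod_cast hn
  have hq1' : (0:ℝ) < q1 := by exact_mod_cast hq1
  have hW1' : (0:ℝ) < W1 := by exact_mod_cast hW1
  have hq20 : 0 < q2 := by omega
  have hq2r : (0:ℝ) < q2 := by exact_mod_cast hq20
  obtain ⟨cc, hcc⟩ : ∃ cc : ℝ, cc = q1 / (5 * (n:ℝ)^2) := ⟨_, rfl⟩
  have hcc0 : 0 < cc := by rw [hcc]; positivity
  let g : ι → ι → Fin n → Fin n → ℝ := fun i j a b => cc * cst G φ E1 i j a b + T * (if i = j then 0 else mis G φ2 E2 a b)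
  have hm0 : ∀ (i j : ι) (a b : Fin n), 0 ≤ (if i = j then 0 else mis G φ2 E2 a b) := by
    intro i j a b
    split_ifs
    · exact le_rfl
    · exact mis_nonneg _ _ _ _ _
  have hcard : (Fintype.card ι : ℝ) ≤ W1 := by exact_mod_cast card_clus G q1 W1 hn φ E1 h1
  have havg1 : ∑ i, ∑ j, (∑ a ∈ S i, ∑ b ∈ S j, cst G φ E1 i j a b) / ((#(S i) : ℝ) * #(S j)) ≤ 2 * (n:ℝ)^2 / q1 := by
    calc _ ≤ ∑ i, 2 * #(vcl φ E1 i) * ((n:ℝ) / q1) := Finset.sum_le_sum fun i _ => cst_row G q1 W1 hq1 φ E1 h1 S hSsub hne hSc i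
      _ = (2 * ((n:ℝ) / q1)) * ((∑ i, #(vcl φ E1 i) : ℕ) : ℝ) := by
        push_cast
        rw [Finset.mul_sum]
        exact Finset.sum_congr rfl fun i _ => by ring
      _ ≤ (2 * ((n:ℝ) / q1)) * n := by
        refine mul_le_mul_of_nonneg_left (by exact_mod_cast vcl_total φ E1) (by positivity)
      _ = _ := by ring
  have havg2 : ∀ i j, (∑ a ∈ S i, ∑ b ∈ S j, (if i = j then 0 else mis G φ2 E2 a b)) / ((#(S i) : ℝ) * #(S j)) ≤ 4 * W1 / q2 := by
    intro i j
    have hE : ∀ i, ∀ a ∈ S i, a ∉ E2 := fun i a ha => (Finset.mem_sdiff.1 ha).2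
    have b1 : ∑ a ∈ S i, ∑ b ∈ S j, (if i = j then 0 else mis G φ2 E2 a b) ≤ ((#(S i) : ℝ) + #(S j)) * ((n : ℝ) / q2) := by
      refine le_trans (Finset.sum_le_sum fun a _ => Finset.sum_le_sum fun b _ => ?_)
        (mis_sum G q2 W2 hq20 φ2 E2 h2 (S i) (S j) (hE i) (hE j))
      split_ifs
      · exact mis_nonneg _ _ _ _ _
      · exact le_rfl
    have b2 : ∀ i, (n:ℝ) ≤ 2 * W1 * #(S i) := fun i => by exact_mod_cast hSbig i
    rw [div_le_iff₀ (mul_pos (hpos i) (hpos j))]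
    refine b1.trans ?_
    have b3 : ((#(S i) : ℝ) + #(S j)) * n ≤ 4 * W1 * (#(S i) * #(S j)) := by
      have := mul_le_mul_of_nonneg_left (b2 j) (hpos i).le
      have := mul_le_mul_of_nonneg_left (b2 i) (hpos j).le
      nlinarith
    calc ((#(S i) : ℝ) + #(S j)) * ((n : ℝ) / q2) = (((#(S i) : ℝ) + #(S j)) * n) / q2 := by ring
      _ ≤ (4 * W1 * (#(S i) * #(S j))) / q2 := div_le_div_of_nonneg_right b3 hq2r.le
      _ = _ := by ring
  have havg3 : ∑ i, ∑ j, (∑ a ∈ S i, ∑ b ∈ S j, (if i = j then 0 else mis G φ2 E2 a b)) / ((#(S i) : ℝ) * #(S j)) ≤ 4 * W1^3 / q2 := by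
    calc _ ≤ ∑ i : ι, ∑ j : ι, (4 * W1 / q2 : ℝ) := Finset.sum_le_sum fun i _ => Finset.sum_le_sum fun j _ => havg2 i j
      _ = (Fintype.card ι : ℝ)^2 * (4 * W1 / q2 : ℝ) := by
        simp only [Finset.sum_const, Finset.card_univ, nsmul_eq_mul]; ring
      _ ≤ (W1:ℝ)^2 * (4 * W1 / q2 : ℝ) := by gcongr
      _ = _ := by ring
  have hsplit : ∀ i j, (∑ a ∈ S i, ∑ b ∈ S j, g i j a b) / ((#(S i) : ℝ) * #(S j)) =
      cc * ((∑ a ∈ S i, ∑ b ∈ S j, cst G φ E1 i j a b) / ((#(S i) : ℝ) * #(S j))) +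
      T * ((∑ a ∈ S i, ∑ b ∈ S j, (if i = j then 0 else mis G φ2 E2 a b)) / ((#(S i) : ℝ) * #(S j))) := by
    intro i j
    simp only [g, Finset.sum_add_distrib, ← Finset.mul_sum]
    ring
  obtain ⟨r, hr, hlt⟩ := first_moment S hne g
    (fun i j a b => add_nonneg (mul_nonneg hcc0.le (cst_nonneg _ _ _ _ _ _ _)) (mul_nonneg (Nat.cast_nonneg _) (hm0 _ _ _ _)))
    (fun i a b => by simp [g, cst]) (fun _ => 0) 0 (by simp) (by
      simp only [hsplit, Finset.sum_add_distrib, ← Finset.mul_sum]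
      have c1 := mul_le_mul_of_nonneg_left havg1 hcc0.le
      have c2 := mul_le_mul_of_nonneg_left havg3 (Nat.cast_nonneg (α := ℝ) T)
      have c3 : cc * (2 * (n:ℝ)^2 / q1) = 2 / 5 := by rw [hcc]; field_simp
      have c4 : (T:ℝ) * (4 * W1^3 / q2) ≤ 1 / 4 := by
        have : (16 * T * W1 ^ 3 : ℝ) ≤ q2 := by exact_mod_cast hq2
        rw [← mul_div_assoc, div_le_iff₀ hq2r]
        linarith
      linarith)
  have d1 : ∑ i, ∑ j, g i j (r i) (r j) = cc * ∑ i, ∑ j, cst G φ E1 i j (r i) (r j) +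
      T * ∑ i, ∑ j, (if i = j then 0 else mis G φ2 E2 (r i) (r j)) := by
    simp only [g, Finset.sum_add_distrib, ← Finset.mul_sum]
  rw [d1] at hlt
  have d2 : 0 ≤ ∑ i, ∑ j, cst G φ E1 i j (r i) (r j) := Finset.sum_nonneg fun _ _ => Finset.sum_nonneg fun _ _ => cst_nonneg _ _ _ _ _ _ _
  have d3 : 0 ≤ ∑ i, ∑ j, (if i = j then 0 else mis G φ2 E2 (r i) (r j)) := Finset.sum_nonneg fun _ _ => Finset.sum_nonneg fun _ _ => hm0 _ _ _ _
  have d4 : 0 ≤ cc * ∑ i, ∑ j, cst G φ E1 i j (r i) (r j) := mul_nonneg hcc0.le d2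
  have d5 := mul_nonneg (Nat.cast_nonneg (α := ℝ) T) d3
  rw [Fintype.mem_piFinset] at hr
  refine ⟨r, fun i => Finset.mem_sdiff.1 (hr i), ?_, by linarith⟩
  have d6 : cc * ∑ i, ∑ j, cst G φ E1 i j (r i) (r j) ≤ 1 := by linarith
  have d7 : 5 * (n:ℝ)^2 / q1 = 1 / cc := by rw [hcc]; field_simp
  rw [d7, le_div_iff₀ hcc0, mul_comm]
  exact d6

lemma choose_w {n : ℕ} (hn : 0 < n) (G : SimpleGraph (Fin n)) (ι : Type) [Fintype ι] [Nonempty ι]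
    (q2 W2 : ℕ) (ι2 : Type) (φ2 : Fin n → ι2)
    (E2 : Finset (Fin n)) (h2 : Clus G q2 W2 ι2 φ2 E2) (hW2 : 0 < W2)
    (𝓕 : Finset (Σ k : ℕ, SimpleGraph (Fin k)))
    (k : ℕ) (hk : ∀ p ∈ 𝓕, p.1 ≤ k) (R Q : ℕ) (hR : 0 < R) (hQ : 1 ≤ Q) (hfew : FewC (𝓕 : Set _) G Q)
    (hQ2 : 4 * (#𝓕 * (Fintype.card ι * R * W2) ^ k) ≤ Q)
    (r : ι → Fin n) (hr : ∀ i, r i ∉ E2)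
    (hmis : ((4 * R ^ 2 : ℕ) : ℝ) * ∑ i, ∑ j, (if i = j then 0 else mis G φ2 E2 (r i) (r j)) ≤ 1) :
    ∃ w : ι × Fin R → Fin n, (∀ i j l l', i ≠ j → (G.Adj (w (i, l)) (w (j, l')) ↔ G.Adj (r i) (r j))) ∧
      ∀ p ∈ 𝓕, IsEmpty (p.2 ↪g G.comap w) := by
  set S : ι × Fin R → Finset (Fin n) := fun a => ccl φ2 E2 (r a.1) with hS
  have hne : ∀ a, (S a).Nonempty := fun a => ⟨r a.1, mem_ccl.2 ⟨hr _, rfl⟩⟩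
  have hbig : ∀ a, Fintype.card (Fin n) ≤ W2 * #(S a) := by
    intro a
    rw [Fintype.card_fin]
    exact h2.big (φ2 (r a.1))
  have hc := copies_bound 𝓕 k hk G Q W2 hfew S hbig (by
    rw [Fintype.card_prod, Fintype.card_fin]
    have := Fintype.card_pos (α := ι)
    positivity) (by simpa using hn)
  obtain ⟨Pr, hPr⟩ : ∃ Pr : ℝ, Pr = ∏ a, (#(S a) : ℝ) := ⟨_, rfl⟩
  have hPr0 : 0 ≤ Pr := by rw [hPr]; exact Finset.prod_nonneg (fun _ _ => Nat.cast_nonneg _)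
  let h : (ι × Fin R → Fin n) → ℝ := fun x => if ∃ p ∈ 𝓕, Nonempty (p.2 ↪g G.comap x) then 1 else 0
  have hh : ∑ x ∈ Fintype.piFinset S, h x ≤ (1 / 4) * ∏ a, (#(S a) : ℝ) := by
    have e1 : ∑ x ∈ Fintype.piFinset S, h x = (#{x ∈ Fintype.piFinset S | ∃ p ∈ 𝓕, Nonempty (p.2 ↪g G.comap x)} : ℝ) := by
      simp only [h]
      rw [← Finset.sum_filter, Finset.sum_const, nsmul_eq_mul, mul_one]
    rw [e1]
    rw [← hPr] at hc ⊢
    have e2 : (Q:ℝ) * (#{x ∈ Fintype.piFinset S | ∃ p ∈ 𝓕, Nonempty (p.2 ↪g G.comap x)} : ℝ) ≤ (Q:ℝ) * (1 / 4 * Pr) := by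
      refine hc.trans ?_
      have e3 : (4 * (#𝓕 * (Fintype.card ι * R * W2) ^ k) : ℝ) ≤ Q := by exact_mod_cast hQ2
      have e4 : ((Fintype.card (ι × Fin R) : ℕ) : ℝ) = Fintype.card ι * R := by
        rw [Fintype.card_prod, Fintype.card_fin]; push_cast; ring
      rw [e4]
      have := mul_le_mul_of_nonneg_right e3 hPr0
      linarith
    exact le_of_mul_le_mul_left e2 (by exact_mod_cast hQ)
  let g : ι × Fin R → ι × Fin R → Fin n → Fin n → ℝ := fun a b x y =>
    if a.1 = b.1 then 0 else if (G.Adj x y ↔ G.Adj (r a.1) (r b.1)) then 0 else 1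
  have hg : ∀ a b x y, 0 ≤ g a b x y := by
    intro a b x y
    simp only [g]
    split_ifs <;> norm_num
  have havg : ∀ a b, (∑ x ∈ S a, ∑ y ∈ S b, g a b x y) / ((#(S a) : ℝ) * #(S b)) =
      if a.1 = b.1 then 0 else mis G φ2 E2 (r a.1) (r b.1) := by
    intro a b
    by_cases hab : a.1 = b.1
    · simp [g, hab]
    · simp only [g, hab, if_false]
      rfl
  have hsum : ∑ a, ∑ b, (∑ x ∈ S a, ∑ y ∈ S b, g a b x y) / ((#(S a) : ℝ) * #(S b)) + 1 / 4 < 1 := by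
    simp only [havg, Fintype.sum_prod_type, Finset.sum_const, Finset.card_univ, Fintype.card_fin, nsmul_eq_mul,
      ← Finset.mul_sum]
    push_cast at hmis
    nlinarith
  obtain ⟨w, hw, hlt⟩ := first_moment S hne g hg (fun i a b => by simp [g]) h (1 / 4) hh hsum
  have hh0 : 0 ≤ h w := by simp only [h]; split_ifs <;> norm_num
  have hg1 : ∀ a b, g a b (w a) (w b) < 1 := by
    intro a b
    have s1 : g a b (w a) (w b) ≤ ∑ b, g a b (w a) (w b) :=
      Finset.single_le_sum (f := fun b => g a b (w a) (w b)) (fun b _ => hg _ _ _ _) (Finset.mem_univ b)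
    have s2 : ∑ b, g a b (w a) (w b) ≤ ∑ a, ∑ b, g a b (w a) (w b) :=
      Finset.single_le_sum (f := fun a => ∑ b, g a b (w a) (w b)) (fun a _ => Finset.sum_nonneg fun b _ => hg _ _ _ _) (Finset.mem_univ a)
    linarith
  refine ⟨w, ?_, ?_⟩
  · intro i j l l' hij
    by_contra hcon
    have := hg1 (i, l) (j, l')
    simp [g, hij, hcon] at this
  · intro p hp
    by_contra hcon
    rw [not_isEmpty_iff] at hcon
    have s3 : 0 ≤ ∑ a, ∑ b, g a b (w a) (w b) := Finset.sum_nonneg fun a _ => Finset.sum_nonneg fun b _ => hg _ _ _ _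
    have s4 : h w = 1 := if_pos ⟨p, hp, hcon⟩
    linarith

/-- the cleaned graph -/
def Hgr {n : ℕ} {ι : Type} (G : SimpleGraph (Fin n)) (φ : Fin n → ι) (r : ι → Fin n) (c : ι → Prop) : SimpleGraph (Fin n) where
  Adj x y := x ≠ y ∧ if φ x = φ y then c (φ x) else G.Adj (r (φ x)) (r (φ y))
  symm := ⟨by
    intro x y h
    refine ⟨h.1.symm, ?_⟩
    have h2 := h.2
    by_cases hh : φ x = φ y
    · rw [if_pos hh] at h2
      rw [if_pos hh.symm, ← hh]; exact h2
    · rw [if_neg hh] at h2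
      rw [if_neg (Ne.symm hh)]; exact h2.symm⟩
  loopless := ⟨fun x h => h.1 rfl⟩

lemma H_free {n : ℕ} {ι : Type} (G : SimpleGraph (Fin n)) (φ : Fin n → ι) (r : ι → Fin n)
    (𝓕 : Finset (Σ k : ℕ, SimpleGraph (Fin k)))
    (k : ℕ) (hk : ∀ p ∈ 𝓕, p.1 ≤ k) (w : ι × Fin (2 ^ (k + k)) → Fin n)
    (hw : ∀ i j l l', i ≠ j → (G.Adj (w (i, l)) (w (j, l')) ↔ G.Adj (r i) (r j)))
    (hfree : ∀ p ∈ 𝓕, IsEmpty (p.2 ↪g G.comap w)) :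
    ∃ c : ι → Prop, Hgr G φ r c ∈ InducedFree (𝓕 : Set _) n := by
  have hram : ∀ i : ι, ∃ c : Prop, ∃ τ : Fin k ↪ Fin (2 ^ (k + k)), 
      ∀ a b, a ≠ b → (G.Adj (w (i, τ a)) (w (i, τ b)) ↔ c) := by
    intro i
    obtain ⟨c, τ, -, h⟩ := ramsey_emb (G.comap fun l => w (i, l)) k Finset.univ (by simp)
    exact ⟨c, τ, h⟩
  choose c τ hτ using hram
  refine ⟨c, ?_⟩
  intro p hp
  refine ⟨fun f => (hfree p hp).false ?_⟩
  have hpk := hk p hp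
  let σ : Fin p.1 → ι × Fin (2 ^ (k + k)) := fun v => (φ (f v), τ (φ (f v)) (Fin.castLE hpk v))
  have hσ : Function.Injective σ := by
    intro u v huv
    have e1 : φ (f u) = φ (f v) := congrArg Prod.fst huv
    have e2 : τ (φ (f u)) (Fin.castLE hpk u) = τ (φ (f v)) (Fin.castLE hpk v) := congrArg Prod.snd huv
    rw [e1] at e2
    exact Fin.castLE_injective hpk ((τ _).injective e2)
  refine ⟨⟨σ, hσ⟩, ?_⟩
  intro u v
  simp only [SimpleGraph.comap_adj, Function.Embedding.coeFn_mk]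
  rw [← f.map_adj_iff]
  by_cases huv : u = v
  · subst huv
    simp
  · have hfne : f u ≠ f v := fun h => huv (f.injective h)
    show _ ↔ (f u ≠ f v ∧ _)
    by_cases hφ : φ (f u) = φ (f v)
    · rw [if_pos hφ]
      have : σ u = (φ (f v), τ (φ (f v)) (Fin.castLE hpk u)) := by simp only [σ, hφ]
      rw [this, hφ]
      rw [hτ (φ (f v)) _ _ (fun h => huv (Fin.castLE_injective hpk h))]
      simp [hfne]
    · rw [if_neg hφ, hw _ _ _ _ hφ]
      simp [hfne]

lemma editDist_le {n : ℕ} (G H : SimpleGraph (Fin n)) (D : Finset (Fin n × Fin n))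
    (hD : ∀ x y, x ≠ y → ¬ (G.Adj x y ↔ H.Adj x y) → (x, y) ∈ D) : editDist G H ≤ #D := by
  unfold editDist
  calc _ ≤ Set.ncard ((D.image (fun z => s(z.1, z.2)) : Finset (Sym2 (Fin n))) : Set (Sym2 (Fin n))) := by
        apply Set.ncard_le_ncard _ (Finset.finite_toSet _)
        intro e he
        induction e using Sym2.ind with
        | _ x y =>
          simp only [SimpleGraph.mem_edgeSet, Set.mem_ofPred_eq] at he
          rw [Finset.mem_coe, Finset.mem_image]
          refine ⟨(x, y), hD x y ?_ (by tauto), rfl⟩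
          rintro rfl
          simp at he
    _ ≤ #D := by rw [Set.ncard_coe_finset]; exact Finset.card_image_le

lemma H_edit {n : ℕ} {ι : Type} [Fintype ι] (G : SimpleGraph (Fin n)) (q W : ℕ) (hq : 0 < q) (φ : Fin n → ι) (E : Finset (Fin n))
    (hcl : Clus G q W ι φ E) (r : ι → Fin n) (hr : ∀ i, r i ∈ vcl φ E i) (c : ι → Prop)
    (hcost : ∑ i, ∑ j, cst G φ E i j (r i) (r j) ≤ 5 * (n:ℝ) ^ 2 / q) :
    q * editDist G (Hgr G φ r c) ≤ 9 * n ^ 2 := by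
  let D1 : Finset (Fin n × Fin n) := E ×ˢ Finset.univ
  let D2 : Finset (Fin n × Fin n) := Finset.univ ×ˢ E
  let D3 : Finset (Fin n × Fin n) := Finset.univ.biUnion fun i : ι => vcl φ E i ×ˢ vcl φ E i
  let D4 : Finset (Fin n × Fin n) := (Finset.univ \ E).biUnion fun y => dif G y (r (φ y)) ×ˢ {y}
  let F : ι × ι → Finset (Fin n × Fin n) := fun a => if a.1 = a.2 then ∅ else
    (vcl φ E a.1).filter (fun x => r a.2 ∈ dif G x (r a.1)) ×ˢ vcl φ E a.2
  let D5 : Finset (Fin n × Fin n) := Finset.univ.biUnion F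
  have hb1 : q * #D1 ≤ n ^ 2 := by
    simp only [D1, Finset.card_product, Finset.card_univ, Fintype.card_fin]
    nlinarith [hcl.hE]
  have hb2 : q * #D2 ≤ n ^ 2 := by
    simp only [D2, Finset.card_product, Finset.card_univ, Fintype.card_fin]
    nlinarith [hcl.hE]
  have hb3 : q * #D3 ≤ n ^ 2 := by
    calc q * #D3 ≤ q * ∑ i : ι, #(vcl φ E i ×ˢ vcl φ E i) := Nat.mul_le_mul_left _ Finset.card_biUnion_le
      _ = ∑ i : ι, (q * #(vcl φ E i)) * #(vcl φ E i) := by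
        rw [Finset.mul_sum]
        exact Finset.sum_congr rfl fun i _ => by rw [Finset.card_product]; ring
      _ ≤ ∑ i : ι, n * #(vcl φ E i) := Finset.sum_le_sum fun i _ => Nat.mul_le_mul_right _ (hcl.small i)
      _ = n * ∑ i : ι, #(vcl φ E i) := by rw [Finset.mul_sum]
      _ ≤ n * n := Nat.mul_le_mul_left _ (vcl_total φ E)
      _ = _ := by ring
  have hb4 : q * #D4 ≤ n ^ 2 := by
    calc q * #D4 ≤ q * ∑ y ∈ Finset.univ \ E, #(dif G y (r (φ y)) ×ˢ {y}) := Nat.mul_le_mul_left _ Finset.card_biUnion_le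
      _ = ∑ y ∈ Finset.univ \ E, q * #(dif G y (r (φ y))) := by
        rw [Finset.mul_sum]
        exact Finset.sum_congr rfl fun i _ => by rw [Finset.card_product]; simp
      _ ≤ ∑ y ∈ Finset.univ \ E, n := Finset.sum_le_sum fun y hy => by
        have hy' : y ∉ E := (Finset.mem_sdiff.1 hy).2
        have := mem_vcl.1 (hr (φ y))
        exact hcl.close _ _ hy' this.1 this.2.symm
      _ = #(Finset.univ \ E) * n := by rw [Finset.sum_const, smul_eq_mul]
      _ ≤ n * n := Nat.mul_le_mul_right _ (by simpa using Finset.card_le_univ (Finset.univ \ E))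
      _ = _ := by ring
  have hb5 : q * #D5 ≤ 5 * n ^ 2 := by
    have hq' : (0:ℝ) < q := by exact_mod_cast hq
    have : (#D5 : ℝ) ≤ 5 * (n:ℝ) ^ 2 / q := by
      refine le_trans ?_ hcost
      calc (#D5 : ℝ) ≤ ((∑ a : ι × ι, #(F a) : ℕ) : ℝ) := by exact_mod_cast Finset.card_biUnion_le
        _ = ∑ a : ι × ι, cst G φ E a.1 a.2 (r a.1) (r a.2) := by
          rw [Nat.cast_sum]
          refine Finset.sum_congr rfl fun a _ => ?_
          by_cases ha : a.1 = a.2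
          · simp [F, ha, cst]
          · simp only [F, ha, cst, if_false]
            rw [Finset.card_product, Nat.cast_mul, ← Finset.sum_filter, Finset.sum_const, nsmul_eq_mul, mul_one, mul_comm]
        _ = _ := Fintype.sum_prod_type _
    rw [le_div_iff₀ hq', mul_comm] at this
    exact_mod_cast this
  have hle : editDist G (Hgr G φ r c) ≤ #(D1 ∪ D2 ∪ D3 ∪ D4 ∪ D5) := by
    apply editDist_le
    intro x y hxy hne
    by_contra hcon
    simp only [Finset.mem_union, not_or] at hcon
    obtain ⟨⟨⟨⟨n1, n2⟩, n3⟩, n4⟩, n5⟩ := hcon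
    have hx : x ∉ E := fun h => n1 (Finset.mem_product.2 ⟨h, Finset.mem_univ _⟩)
    have hy : y ∉ E := fun h => n2 (Finset.mem_product.2 ⟨Finset.mem_univ _, h⟩)
    have hφ : φ x ≠ φ y := fun h => n3 (Finset.mem_biUnion.2 ⟨φ y, Finset.mem_univ _,
      Finset.mem_product.2 ⟨mem_vcl.2 ⟨hx, h⟩, mem_vcl.2 ⟨hy, rfl⟩⟩⟩)
    have a1 : x ∉ dif G y (r (φ y)) := fun h => n4 (Finset.mem_biUnion.2 ⟨y, Finset.mem_sdiff.2 ⟨Finset.mem_univ _, hy⟩,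
      Finset.mem_product.2 ⟨h, Finset.mem_singleton_self _⟩⟩)
    have a2 : r (φ y) ∉ dif G x (r (φ x)) := fun h => n5 (Finset.mem_biUnion.2 ⟨(φ x, φ y), Finset.mem_univ _, by
      simp only [F, hφ, if_false]
      exact Finset.mem_product.2 ⟨Finset.mem_filter.2 ⟨mem_vcl.2 ⟨hx, rfl⟩, h⟩, mem_vcl.2 ⟨hy, rfl⟩⟩⟩)
    simp only [dif, Finset.mem_filter, Finset.mem_univ, true_and, not_not] at a1 a2
    apply hne
    show _ ↔ (x ≠ y ∧ _)
    rw [if_neg hφ, ← a2, G.adj_comm x y, a1, G.adj_comm x]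
    simp [hxy]
  have u1 := Finset.card_union_le (D1 ∪ D2 ∪ D3 ∪ D4) D5
  have u2 := Finset.card_union_le (D1 ∪ D2 ∪ D3) D4
  have u3 := Finset.card_union_le (D1 ∪ D2) D3
  have u4 := Finset.card_union_le D1 D2
  have u5 : #(D1 ∪ D2 ∪ D3 ∪ D4 ∪ D5) ≤ #D1 + #D2 + #D3 + #D4 + #D5 := by omega
  have := Nat.mul_le_mul_left q (hle.trans u5)
  nlinarith

lemma core (𝓕 : Finset (Σ k : ℕ, SimpleGraph (Fin k)))
    (k : ℕ) (hk : ∀ p ∈ 𝓕, p.1 ≤ k) (d : ℕ)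
    (hd : ∀ (N s : ℕ) (Γ : SimpleGraph (Fin N ⊕ Fin s)) (I : Finset (Fin N)),
    (∀ p ∈ (𝓕 : Set (Σ k : ℕ, SimpleGraph (Fin k))), IsEmpty (p.2 ↪g Γ)) →
    (∀ i ∈ I, ∀ j ∈ I, i ≠ j → ∃ a : Fin s, ¬ (Γ.Adj (Sum.inl i) (Sum.inr a) ↔ Γ.Adj (Sum.inl j) (Sum.inr a))) →
    #I ≤ (s + 1) ^ d) :
    ∃ C : ℕ, ∀ q : ℕ, 2 ≤ q → ∀ n : ℕ, q ^ C ≤ n → ∀ G : SimpleGraph (Fin n), FewC (𝓕 : Set _) G (q ^ C) →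
      ∃ H ∈ InducedFree (𝓕 : Set _) n, q * editDist G H < n ^ 2 := by
  obtain ⟨C0, hC0⟩ := cluster 𝓕 k hk d hd
  set R := 2 ^ (k + k) with hR
  have hR0 : 0 < R := by positivity
  -- q1 = 10 q ≤ q^11 ; W1 = q1^C0 ≤ q^(11 C0)
  set B1 := 11 * C0 with hB1
  set B2 := 64 * R ^ 2 + 3 * B1 with hB2
  set C := 4 * #𝓕 + (B1 + R + B2 * C0) * k + B1 + B2 * C0 with hC
  refine ⟨C, fun q hq n hn G hfew => ?_⟩
  have hq0 : 0 < q := by omega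
  have hqC : ∀ e, e ≤ C → q ^ e ≤ q ^ C := fun e he => Nat.pow_le_pow_right hq0 he
  have hn0 : 0 < n := lt_of_lt_of_le (Nat.pow_pos hq0) hn
  have hq1 : 10 * q ≤ q ^ 11 := by
    calc 10 * q ≤ q ^ 10 * q := Nat.mul_le_mul_right _ (const_le_pow 10 q hq)
      _ = q ^ 11 := by ring
  have hW1 : (10 * q) ^ C0 ≤ q ^ B1 := by
    calc (10 * q) ^ C0 ≤ (q ^ 11) ^ C0 := Nat.pow_le_pow_left hq1 _
      _ = q ^ B1 := by rw [← pow_mul]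
  obtain ⟨ι, _, φ, E1, h1⟩ := hC0 (10 * q) (by omega) n ((hW1.trans (hqC _ (by rw [hC]; omega))).trans hn) G
    (hfew.mono (hW1.trans (hqC _ (by rw [hC]; omega))))
  have hq2 : 2 ≤ q ^ B2 := by
    have : 1 ≤ B2 := by rw [hB2]; have := Nat.pow_pos (n := 2) hR0; omega
    calc 2 ≤ q := hq
      _ = q ^ 1 := by ring
      _ ≤ q ^ B2 := Nat.pow_le_pow_right hq0 this
  have hW2 : (q ^ B2) ^ C0 ≤ q ^ C := by rw [← pow_mul]; exact hqC _ (by rw [hC]; omega)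
  obtain ⟨ι2, _, φ2, E2, h2⟩ := hC0 (q ^ B2) hq2 n (hW2.trans hn) G (hfew.mono hW2)
  have hq2b : 16 * (4 * R ^ 2) * ((10 * q) ^ C0) ^ 3 ≤ q ^ B2 := by
    calc 16 * (4 * R ^ 2) * ((10 * q) ^ C0) ^ 3 ≤ q ^ (64 * R ^ 2) * (q ^ B1) ^ 3 := by
          refine Nat.mul_le_mul ?_ (Nat.pow_le_pow_left hW1 3)
          have := const_le_pow (64 * R ^ 2) q hq
          linarith
      _ = q ^ B2 := by rw [← pow_mul q B1 3, ← pow_add q, mul_comm B1 3]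
  have hw1pos : 0 < (10 * q) ^ C0 := by positivity
  obtain ⟨r, hr, hcost, hmis⟩ := choose_r hn0 G (10 * q) ((10 * q) ^ C0) ι φ E1 h1 (q ^ B2) ((q ^ B2) ^ C0) ι2 φ2 E2 h2
    (by omega) (4 * R ^ 2) (by have := Nat.pow_pos (n := 2) hR0; omega) hw1pos hq2b
  have hιne : Nonempty ι := ⟨φ ⟨0, hn0⟩⟩
  have hcard := card_clus G _ _ hn0 φ E1 h1
  have hQ : 4 * (#𝓕 * (Fintype.card ι * R * (q ^ B2) ^ C0) ^ k) ≤ q ^ C := by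
    have f1 : Fintype.card ι * R * (q ^ B2) ^ C0 ≤ q ^ (B1 + R + B2 * C0) := by
      rw [pow_add q (B1 + R) (B2 * C0), pow_add q B1 R, pow_mul q B2 C0]
      exact Nat.mul_le_mul_right _ (Nat.mul_le_mul (hcard.trans hW1) (const_le_pow R q hq))
    calc 4 * (#𝓕 * (Fintype.card ι * R * (q ^ B2) ^ C0) ^ k) = (4 * #𝓕) * (Fintype.card ι * R * (q ^ B2) ^ C0) ^ k := by ring
      _ ≤ q ^ (4 * #𝓕) * (q ^ (B1 + R + B2 * C0)) ^ k :=
        Nat.mul_le_mul (const_le_pow _ q hq) (Nat.pow_le_pow_left f1 k)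
      _ = q ^ (4 * #𝓕 + (B1 + R + B2 * C0) * k) := by rw [← pow_mul, ← pow_add]
      _ ≤ q ^ C := hqC _ (by rw [hC]; omega)
  obtain ⟨w, hw, hfree⟩ := choose_w hn0 G ι (q ^ B2) ((q ^ B2) ^ C0) ι2 φ2 E2 h2 (by positivity) 𝓕 k hk R (q ^ C) hR0
    (Nat.one_le_pow _ _ hq0) hfew hQ r (fun i => (hr i).2) hmis
  obtain ⟨c, hc⟩ := H_free G φ r 𝓕 k hk w hw hfree
  refine ⟨_, hc, ?_⟩
  have := H_edit G (10 * q) _ (by omega) φ E1 h1 r (fun i => (hr i).1) c hcost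
  have hnn : 0 < n ^ 2 := by positivity
  nlinarith

def freeS {n : ℕ} (p : Σ k : ℕ, SimpleGraph (Fin k)) (G : SimpleGraph (Fin n)) (m : ℕ) : Finset (Finset (Fin n)) :=
  {Q ∈ (Finset.univ : Finset (Fin n)).powersetCard m | ∀ f : p.2 ↪g G, ¬ ∀ v, f v ∈ Q}

lemma mem_freeS {n : ℕ} {p : Σ k : ℕ, SimpleGraph (Fin k)} {G : SimpleGraph (Fin n)} {m : ℕ} {Q : Finset (Fin n)} :
    Q ∈ freeS p G m ↔ #Q = m ∧ ∀ f : p.2 ↪g G, ¬ ∀ v, f v ∈ Q := by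
  simp [freeS, Finset.mem_powersetCard]

lemma free_fact {n : ℕ} (p : Σ k : ℕ, SimpleGraph (Fin k)) (G : SimpleGraph (Fin n)) (t : ℕ) :
    #(freeS p G (t * p.1)) * (t * p.1).factorial ≤ (n ^ p.1 - indCount p G) ^ t := by
  let pat : (Fin p.1 → Fin n) → Prop := fun y => ∀ u v, u ≠ v → (G.Adj (y u) (y v) ↔ p.2.Adj u v)
  let Tt := Fin t × Fin p.1
  let X := Σ Q : {Q // Q ∈ freeS p G (t * p.1)}, (Tt ≃ {x // x ∈ Q.1})
  have hX : Fintype.card X = #(freeS p G (t * p.1)) * (t * p.1).factorial := by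
    rw [Fintype.card_sigma]
    have : ∀ Q : {Q // Q ∈ freeS p G (t * p.1)}, Fintype.card (Tt ≃ {x // x ∈ Q.1}) = (t * p.1).factorial := by
      intro Q
      have hc : Fintype.card Tt = t * p.1 := by simp [Tt]
      have hc2 : Fintype.card {x // x ∈ Q.1} = t * p.1 := by
        rw [Fintype.card_coe]; exact (mem_freeS.1 Q.2).1
      rw [Fintype.card_equiv (Fintype.equivOfCardEq (hc.trans hc2.symm)), hc]
    simp [this]
  have hB : Fintype.card {b : Fin p.1 → Fin n // ¬ pat b} = n ^ p.1 - indCount p G := by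
    rw [Fintype.card_subtype_compl, Fintype.card_fun, Fintype.card_fin, Fintype.card_fin, Fintype.card_subtype]
    rfl
  have hA : Fintype.card (Fin t → {b : Fin p.1 → Fin n // ¬ pat b}) = (n ^ p.1 - indCount p G) ^ t := by
    rw [Fintype.card_fun, Fintype.card_fin, hB]
  rw [← hX, ← hA]
  have hbad : ∀ (x : X) (a : Fin t), ¬ pat (fun v => ((x.2 (a, v)) : Fin n)) := by
    intro x a hpat
    refine (mem_freeS.1 x.1.2).2 ⟨⟨fun v => ((x.2 (a, v)) : Fin n), ?_⟩, ?_⟩ ?_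
    · intro u v huv
      have := x.2.injective (Subtype.ext huv)
      exact congrArg Prod.snd this
    · intro u v
      by_cases huv : u = v
      · subst huv; simp
      · exact hpat u v huv
    · intro v
      exact (x.2 (a, v)).2
  refine Fintype.card_le_of_injective (fun x a => ⟨fun v => ((x.2 (a, v)) : Fin n), hbad x a⟩) ?_
  rintro ⟨⟨Q, hQ⟩, e⟩ ⟨⟨Q', hQ'⟩, e'⟩ h
  have h1 : ∀ a : Tt, (e a : Fin n) = (e' a : Fin n) := by
    rintro ⟨a, v⟩
    have h2 := congrFun h a
    have h3 := congrFun (congrArg Subtype.val h2) v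
    exact h3
  have hQQ : Q = Q' := by
    ext x
    constructor
    · intro hx
      have := h1 (e.symm ⟨x, hx⟩)
      rw [Equiv.apply_symm_apply] at this
      simp only at this
      rw [this]
      exact (e' _).2
    · intro hx
      have := h1 (e'.symm ⟨x, hx⟩)
      rw [Equiv.apply_symm_apply] at this
      simp only at this
      rw [← this]
      exact (e _).2
  subst hQQ
  have : e = e' := Equiv.ext fun a => Subtype.ext (h1 a)
  rw [this]

lemma free_mono {n : ℕ} (p : Σ k : ℕ, SimpleGraph (Fin k)) (G : SimpleGraph (Fin n)) (m0 m : ℕ) :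
    #(freeS p G m) * m.choose m0 ≤ #(freeS p G m0) * (n - m0).choose (m - m0) := by
  apply Finset.card_mul_le_card_mul (fun Q P => P ⊆ Q)
  · intro Q hQ
    rw [mem_freeS] at hQ
    rw [← hQ.1, ← Finset.card_powersetCard]
    apply Finset.card_le_card
    intro P hP
    rw [Finset.mem_powersetCard] at hP
    rw [Finset.mem_bipartiteAbove, mem_freeS]
    exact ⟨⟨hP.2, fun f hf => hQ.2 f fun v => hP.1 (hf v)⟩, hP.1⟩
  · intro P hP
    rw [mem_freeS] at hP
    have hc : #(Finset.univ \ P) = n - m0 := by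
      rw [Finset.card_sdiff_of_subset (Finset.subset_univ _), hP.1]; simp
    rw [← hc, ← Finset.card_powersetCard]
    apply Finset.card_le_card_of_injOn (fun Q => Q \ P)
    · intro Q hQ
      have hQ := (Finset.mem_bipartiteBelow _).1 (Finset.mem_coe.1 hQ)
      rw [Finset.mem_coe, Finset.mem_powersetCard]
      refine ⟨Finset.sdiff_subset_sdiff (Finset.subset_univ _) subset_rfl, ?_⟩
      rw [Finset.card_sdiff_of_subset hQ.2, hP.1, (mem_freeS.1 hQ.1).1]
    · intro Q hQ Q' hQ' h
      have hQ := (Finset.mem_bipartiteBelow _).1 (Finset.mem_coe.1 hQ)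
      have hQ' := (Finset.mem_bipartiteBelow _).1 (Finset.mem_coe.1 hQ')
      simp only at h
      rw [← Finset.sdiff_union_of_subset hQ.2, h, Finset.sdiff_union_of_subset hQ'.2]

lemma pow_le_desc (n m : ℕ) (h : 2 * m ^ 2 ≤ n) : (n:ℝ) ^ m ≤ 2 * (n.descFactorial m : ℝ) := by
  rcases Nat.eq_zero_or_pos m with rfl | hm
  · simp
  have hmn : m ≤ n := by nlinarith
  have hn : (0:ℝ) < n := by exact_mod_cast lt_of_lt_of_le hm hmn
  have h1 : ((n:ℝ) - m) ^ m ≤ (n.descFactorial m : ℝ) := by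
    have h2 := Nat.pow_sub_le_descFactorial n m
    have h3 : (n - m) ^ m ≤ n.descFactorial m := le_trans (Nat.pow_le_pow_left (by omega) m) h2
    rw [← Nat.cast_sub hmn]
    exact_mod_cast h3
  have hr : (2 * m ^ 2 : ℝ) ≤ n := by exact_mod_cast h
  have hmn' : (m:ℝ) ≤ n := by exact_mod_cast hmn
  have h4 : (1:ℝ) / 2 ≤ (1 + (-(m:ℝ) / n)) ^ m := by
    refine le_trans ?_ (one_add_mul_le_pow ?_ m)
    · have : (m:ℝ) * (-(m:ℝ) / n) = - ((m:ℝ)^2 / n) := by ring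
      rw [this]
      have : (m:ℝ)^2 / n ≤ 1 / 2 := by rw [div_le_iff₀ hn]; linarith
      linarith
    · have : (m:ℝ) / n ≤ 1 := by rw [div_le_iff₀ hn]; linarith
      have e : (-(m:ℝ)) / n = - ((m:ℝ)/n) := by ring
      rw [e]; linarith
  have h5 : ((n:ℝ) - m) ^ m = n ^ m * (1 + (-(m:ℝ) / n)) ^ m := by
    rw [← mul_pow]; congr 1; field_simp; ring
  rw [h5] at h1
  have := mul_le_mul_of_nonneg_left h4 (pow_nonneg hn.le m)
  linarith

lemma free_bound {n : ℕ} (p : Σ k : ℕ, SimpleGraph (Fin k)) (G : SimpleGraph (Fin n)) (K m : ℕ) (hK : 1 ≤ K)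
    (hn : 2 * (3 * K * p.1) ^ 2 ≤ n) (hm : 3 * K * p.1 ≤ m) (hI : n ^ p.1 ≤ K * indCount p G) :
    (#(freeS p G m) : ℝ) ≤ 1 / 4 * (n.choose m : ℝ) := by
  set m0 := 3 * K * p.1 with hm0
  have hIle : indCount p G ≤ n ^ p.1 := by
    unfold indCount
    refine (Finset.card_le_univ _).trans (le_of_eq ?_)
    simp
  have hKr : (0:ℝ) < K := by exact_mod_cast hK
  have h1 : (#(freeS p G m0) : ℝ) * m0.factorial ≤ ((n:ℝ) ^ p.1 * (1 - 1 / K)) ^ (3 * K) := by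
    have := free_fact p G (3 * K)
    have e1 : (#(freeS p G m0) : ℝ) * m0.factorial ≤ ((n ^ p.1 - indCount p G : ℕ) : ℝ) ^ (3 * K) := by exact_mod_cast this
    refine e1.trans (pow_le_pow_left₀ (Nat.cast_nonneg _) ?_ _)
    rw [Nat.cast_sub hIle]
    push_cast
    have e2 : (n:ℝ) ^ p.1 ≤ K * indCount p G := by exact_mod_cast hI
    have e3 : (n:ℝ) ^ p.1 / K ≤ indCount p G := by rw [div_le_iff₀ hKr]; linarith
    have e4 : (n:ℝ) ^ p.1 * (1 - 1 / K) = (n:ℝ) ^ p.1 - (n:ℝ) ^ p.1 / K := by ring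
    rw [e4]; linarith
  have hK1 : (0:ℝ) ≤ 1 - 1 / K := by
    have : (1:ℝ) ≤ K := by exact_mod_cast hK
    have : 1 / (K:ℝ) ≤ 1 := by rw [div_le_iff₀ hKr]; linarith
    linarith
  have h2 : (1 - 1 / (K:ℝ)) ^ (3 * K) ≤ 1 / 8 := by
    rw [mul_comm, pow_mul]
    calc ((1 - 1 / (K:ℝ)) ^ K) ^ 3 ≤ (1 / 2) ^ 3 := pow_le_pow_left₀ (pow_nonneg hK1 _) (half_pow K hK) 3
      _ = 1 / 8 := by norm_num
  have h3 : (#(freeS p G m0) : ℝ) * m0.factorial ≤ (1 / 4 * (n.choose m0 : ℝ)) * m0.factorial := by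
    refine h1.trans ?_
    rw [mul_pow, ← pow_mul]
    have e1 : p.1 * (3 * K) = m0 := by rw [hm0]; ring
    rw [e1]
    have e2 := pow_le_desc n m0 hn
    have e3 : (n.descFactorial m0 : ℝ) = m0.factorial * n.choose m0 := by
      rw [Nat.descFactorial_eq_factorial_mul_choose]; push_cast; ring
    rw [e3] at e2
    have e4 := mul_le_mul_of_nonneg_left h2 (pow_nonneg (Nat.cast_nonneg (α := ℝ) n) m0)
    linarith
  have hf : (0:ℝ) < m0.factorial := by exact_mod_cast Nat.factorial_pos _
  have h4 := le_of_mul_le_mul_right h3 hf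
  have h5 : (#(freeS p G m) : ℝ) * m.choose m0 ≤ #(freeS p G m0) * (n - m0).choose (m - m0) := by
    exact_mod_cast free_mono p G m0 m
  have hch : (0:ℝ) < m.choose m0 := by exact_mod_cast Nat.choose_pos hm
  by_cases hmn : m ≤ n
  · have h6 : (n.choose m : ℝ) * m.choose m0 = n.choose m0 * (n - m0).choose (m - m0) := by
      exact_mod_cast Nat.choose_mul hm
    refine le_of_mul_le_mul_right ?_ hch
    have := mul_le_mul_of_nonneg_right h4 (Nat.cast_nonneg (α := ℝ) ((n - m0).choose (m - m0)))
    calc _ ≤ _ := h5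
      _ ≤ _ := this
      _ = _ := by rw [mul_assoc, ← h6]; ring
  · have : #(freeS p G m) = 0 := by
      rw [Finset.card_eq_zero]
      apply Finset.eq_empty_of_forall_notMem
      intro Q hQ
      have h7 := (mem_freeS.1 hQ).1
      have := Finset.card_le_univ Q
      rw [Fintype.card_fin] at this
      omega
    rw [this]
    simp

lemma test_bound {n : ℕ} (𝓕 : Set (Σ k : ℕ, SimpleGraph (Fin k))) (p : Σ k : ℕ, SimpleGraph (Fin k)) (hp : p ∈ 𝓕)
    (G : SimpleGraph (Fin n)) (m : ℕ) (hfree : (#(freeS p G m) : ℝ) ≤ 1 / 4 * (n.choose m : ℝ)) :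
    (2 / 3 : ℝ) * (((Finset.univ : Finset (Fin n)).powersetCard m).card : ℝ) ≤
      ((((Finset.univ : Finset (Fin n)).powersetCard m).filter
        fun Q => ∃ h : Q.card = m, inducedOn G Q h ∉ InducedFree 𝓕 m).card : ℝ) := by
  have h1 : (((Finset.univ : Finset (Fin n)).powersetCard m).filter
        fun Q => ¬ ∃ h : Q.card = m, inducedOn G Q h ∉ InducedFree 𝓕 m) ⊆ freeS p G m := by
    intro Q hQ
    rw [Finset.mem_filter, Finset.mem_powersetCard] at hQ
    rw [mem_freeS]
    refine ⟨hQ.1.2, fun f hf => hQ.2 ⟨hQ.1.2, fun hin => ?_⟩⟩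
    refine (hin p hp).false ⟨⟨fun v => (Q.orderIsoOfFin hQ.1.2).symm ⟨f v, hf v⟩, ?_⟩, ?_⟩
    · intro u v huv
      have := (Q.orderIsoOfFin hQ.1.2).symm.injective huv
      exact f.injective (congrArg Subtype.val this)
    · intro u v
      show G.Adj ((Q.orderIsoOfFin hQ.1.2) ((Q.orderIsoOfFin hQ.1.2).symm ⟨f u, hf u⟩) : Fin n)
        ((Q.orderIsoOfFin hQ.1.2) ((Q.orderIsoOfFin hQ.1.2).symm ⟨f v, hf v⟩) : Fin n) ↔ _
      rw [OrderIso.apply_symm_apply, OrderIso.apply_symm_apply]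
      exact f.map_adj_iff
  have h2 := Finset.card_filter_add_card_filter_not (s := (Finset.univ : Finset (Fin n)).powersetCard m)
    (fun Q => ∃ h : Q.card = m, inducedOn G Q h ∉ InducedFree 𝓕 m)
  have h3 := Finset.card_le_card h1
  have h4 : #((Finset.univ : Finset (Fin n)).powersetCard m) = n.choose m := by simp
  have h5 : #((Finset.univ : Finset (Fin n)).powersetCard m) ≤ #(((Finset.univ : Finset (Fin n)).powersetCard m).filter
        fun Q => ∃ h : Q.card = m, inducedOn G Q h ∉ InducedFree 𝓕 m) + #(freeS p G m) := by omega
  have h6 : (#((Finset.univ : Finset (Fin n)).powersetCard m) : ℝ) ≤ #(((Finset.univ : Finset (Fin n)).powersetCard m).filter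
        fun Q => ∃ h : Q.card = m, inducedOn G Q h ∉ InducedFree 𝓕 m) + #(freeS p G m) := by exact_mod_cast h5
  rw [← h4] at hfree
  have h7 : (0:ℝ) ≤ #((Finset.univ : Finset (Fin n)).powersetCard m) := Nat.cast_nonneg _
  linarith

/-- If a finite family of graphs contains a bipartite graph, a co-bipartite
graph and a split graph, then the property of being induced `𝓕`-free is easily testable. -/
theorem easily_testable_of_bip_cobip_split
    (𝓕 : Set (Σ k : ℕ, SimpleGraph (Fin k))) (hfin : 𝓕.Finite)
    (hbip : ∃ p ∈ 𝓕, IsBipGraph p.2)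
    (hcobip : ∃ p ∈ 𝓕, IsCoBipGraph p.2)
    (hsplit : ∃ p ∈ 𝓕, IsSplitGraph p.2) :
    EasilyTestable (InducedFree 𝓕) := by
  obtain ⟨Fs, rfl⟩ : ∃ Fs : Finset (Σ k : ℕ, SimpleGraph (Fin k)), (Fs : Set (Σ k : ℕ, SimpleGraph (Fin k))) = 𝓕 := hfin.exists_finset_coe
  obtain ⟨k, hk⟩ : ∃ k : ℕ, ∀ p ∈ Fs, p.1 ≤ k := ⟨Fs.sup (fun p => p.1), fun p hp => Finset.le_sup (f := fun p => p.1) hp⟩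
  obtain ⟨d, hd⟩ := few_traces (𝓕 := (Fs : Set (Σ k : ℕ, SimpleGraph (Fin k)))) k (fun p hp => hk p hp)
    (types_of hbip hcobip hsplit)
  obtain ⟨C, hC⟩ := core Fs k hk d hd
  obtain ⟨C', hC'⟩ : ∃ C' : ℕ, C' = 18 * k ^ 2 + 2 * C + 1 := ⟨_, rfl⟩
  refine ⟨((2 * C' : ℕ) : ℝ), by rw [hC']; positivity, ?_⟩
  intro ε hε hε2 n G hn hfar
  obtain ⟨m, hm⟩ : ∃ m : ℕ, m = ⌈ε ^ (-((2 * C' : ℕ) : ℝ))⌉₊ := ⟨_, rfl⟩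
  rw [← hm]
  obtain ⟨q, hqd⟩ : ∃ q : ℕ, q = ⌈1 / ε⌉₊ := ⟨_, rfl⟩
  have hinv : 2 < 1 / ε := by rw [lt_div_iff₀ hε]; linarith
  have hq1 : 1 / ε ≤ q := by rw [hqd]; exact Nat.le_ceil _
  have hq2 : 2 ≤ q := by
    have : (2:ℝ) < q := lt_of_lt_of_le hinv hq1
    exact_mod_cast this.le
  have hqle : (q:ℝ) ≤ (1 / ε) ^ 2 := by
    have : (q:ℝ) < 1 / ε + 1 := by rw [hqd]; exact Nat.ceil_lt_add_one (by positivity)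
    nlinarith
  have hpow : (q:ℝ) ^ C' ≤ ε ^ (-((2 * C' : ℕ) : ℝ)) := by
    rw [Real.rpow_neg hε.le, Real.rpow_natCast, ← inv_pow, pow_mul, ← one_div]
    exact pow_le_pow_left₀ (by positivity) hqle _
  have hqm : q ^ C' ≤ m := by
    have : (q:ℝ) ^ C' ≤ m := hpow.trans (by rw [hm]; exact Nat.le_ceil _)
    exact_mod_cast this
  have hqn : q ^ C' ≤ n := by
    have : (q:ℝ) ^ C' ≤ n := hpow.trans hn
    exact_mod_cast this
  have hCC : q ^ C ≤ q ^ C' := Nat.pow_le_pow_right (by omega) (by omega)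
  have hnot : ¬ FewC (Fs : Set (Σ k : ℕ, SimpleGraph (Fin k))) G (q ^ C) := by
    intro hfew
    obtain ⟨H, hH, hlt⟩ := hC q hq2 n (hCC.trans hqn) G hfew
    have h1 := hfar H hH
    have h2 : (q:ℝ) * editDist G H < (n:ℝ) ^ 2 := by exact_mod_cast hlt
    have hq0 : (0:ℝ) < q := by positivity
    have h3 := mul_le_mul_of_nonneg_left h1 hq0.le
    have h4 : 1 ≤ (q:ℝ) * ε := by rwa [div_le_iff₀ hε] at hq1
    nlinarith [mul_le_mul_of_nonneg_right h4 (sq_nonneg (n:ℝ))]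
  simp only [FewC, not_forall, not_lt, Fintype.card_fin] at hnot
  obtain ⟨p, hp, hI⟩ := hnot
  have hpk := hk p hp
  have hbig : 2 * (3 * q ^ C * p.1) ^ 2 ≤ q ^ C' := by
    calc 2 * (3 * q ^ C * p.1) ^ 2 ≤ 2 * (3 * q ^ C * k) ^ 2 := by gcongr
      _ = (18 * k ^ 2) * q ^ (2 * C) := by rw [mul_comm 2 C, pow_mul]; ring
      _ ≤ q ^ (18 * k ^ 2) * q ^ (2 * C) := Nat.mul_le_mul_right _ (const_le_pow _ q hq2)
      _ = q ^ (18 * k ^ 2 + 2 * C) := by rw [← pow_add]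
      _ ≤ q ^ C' := Nat.pow_le_pow_right (by omega) (by omega)
  apply test_bound _ p hp
  apply free_bound p G (q ^ C) m (Nat.one_le_pow _ _ (by omega)) (hbig.trans hqn) _ hI
  refine le_trans ?_ (hbig.trans hqm)
  have := Nat.le_self_pow (n := 2) (by norm_num) (3 * q ^ C * p.1)
  omega

end
end

section
/- There exist a bipartite graph F₁ and a co-bipartite graph F₂ such that the property P*_{F₁,F₂} of being induced {F₁,F₂}-free is not easily testable. -/
open scoped Classical
open Finset

noncomputable section

lemma my_map_lt {n : ℕ} (D : ℕ) (x : Fin n → ℕ) (h : ∀ i, x i < D) : Behrend.map D x < D ^ n := by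
  induction n with
  | zero => simp [Behrend.map]
  | succ n ih =>
    rw [Behrend.map_succ]
    have h1 := ih (fun i => x i.succ) (fun i => h _)
    have h0 := h 0
    have : (∑ x_1 : Fin n, x x_1.succ * D ^ (x_1 : ℕ)) < D ^ n := by simpa [Behrend.map] using h1
    calc x 0 + (∑ x_1 : Fin n, x x_1.succ * D ^ (x_1 : ℕ)) * D
        < D + (∑ x_1 : Fin n, x x_1.succ * D ^ (x_1 : ℕ)) * D := by omega
      _ = ((∑ x_1 : Fin n, x x_1.succ * D ^ (x_1 : ℕ)) + 1) * D := by ring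
      _ ≤ D ^ n * D := Nat.mul_le_mul_right _ this
      _ = D ^ (n + 1) := by ring

lemma sphere_conv {n d k : ℕ} (v1 v2 v3 v4 v5 w : Fin n → ℕ)
    (h1 : v1 ∈ Behrend.sphere n d k) (h2 : v2 ∈ Behrend.sphere n d k)
    (h3 : v3 ∈ Behrend.sphere n d k) (h4 : v4 ∈ Behrend.sphere n d k)
    (h5 : v5 ∈ Behrend.sphere n d k) (hw : w ∈ Behrend.sphere n d k)
    (h : ∀ i, v1 i + v2 i + v3 i + v4 i + v5 i = 5 * w i) : v1 = v2 := by
  simp only [Behrend.sphere, mem_filter] at h1 h2 h3 h4 h5 hw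
  have e : ∑ i, (((v1 i : ℤ) - w i) ^ 2 + ((v2 i : ℤ) - w i) ^ 2 + ((v3 i : ℤ) - w i) ^ 2
      + ((v4 i : ℤ) - w i) ^ 2 + ((v5 i : ℤ) - w i) ^ 2) = 0 := by
    have q : ∀ v : Fin n → ℕ, ∑ i, v i ^ 2 = k → ∑ i, (v i : ℤ) ^ 2 = k := by
      intro v hv; exact_mod_cast hv
    have : ∀ i, (((v1 i : ℤ) - w i) ^ 2 + ((v2 i : ℤ) - w i) ^ 2 + ((v3 i : ℤ) - w i) ^ 2
      + ((v4 i : ℤ) - w i) ^ 2 + ((v5 i : ℤ) - w i) ^ 2) = (v1 i : ℤ) ^ 2 + (v2 i : ℤ) ^ 2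
      + (v3 i : ℤ) ^ 2 + (v4 i : ℤ) ^ 2 + (v5 i : ℤ) ^ 2 - 5 * (w i : ℤ) ^ 2 := by
      intro i
      have hi : (v1 i : ℤ) + v2 i + v3 i + v4 i + v5 i = 5 * w i := by exact_mod_cast h i
      linear_combination (-2 * (w i : ℤ)) * hi
    simp only [this, sum_add_distrib, sum_sub_distrib, ← mul_sum]
    rw [q _ h1.2, q _ h2.2, q _ h3.2, q _ h4.2, q _ h5.2, q _ hw.2]; ring
  rw [sum_eq_zero_iff_of_nonneg (fun i _ => by positivity)] at e
  funext i
  have := e i (mem_univ _)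
  have a1 : ((v1 i : ℤ) - w i) ^ 2 = 0 := by
    nlinarith [sq_nonneg ((v1 i : ℤ) - w i), sq_nonneg ((v2 i : ℤ) - w i), sq_nonneg ((v3 i : ℤ) - w i), sq_nonneg ((v4 i : ℤ) - w i), sq_nonneg ((v5 i : ℤ) - w i)]
  have a2 : ((v2 i : ℤ) - w i) ^ 2 = 0 := by
    nlinarith [sq_nonneg ((v1 i : ℤ) - w i), sq_nonneg ((v2 i : ℤ) - w i), sq_nonneg ((v3 i : ℤ) - w i), sq_nonneg ((v4 i : ℤ) - w i), sq_nonneg ((v5 i : ℤ) - w i)]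
  rw [sq_eq_zero_iff] at a1 a2
  omega

def FreeSet (S : Finset ℕ) : Prop := ∀ s1 ∈ S, ∀ s2 ∈ S, ∀ s3 ∈ S, ∀ s4 ∈ S, ∀ s5 ∈ S, ∀ s6 ∈ S,
  s1 + s2 + s3 + s4 + s5 = 5 * s6 → s1 = s2

lemma exists_set (n d : ℕ) : ∃ S : Finset ℕ, FreeSet S ∧ (∀ s ∈ S, s < (5 * d) ^ n) ∧
    ((d : ℝ) ^ n / (n * d ^ 2 : ℕ)) ≤ (S.card : ℝ) := by
  obtain ⟨k, hk⟩ := Behrend.exists_large_sphere n d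
  have hb : ∀ v ∈ Behrend.sphere n d k, ∀ i, v i < d := by
    intro v hv i
    exact Behrend.mem_box.1 (Behrend.sphere_subset_box hv) i
  refine ⟨(Behrend.sphere n d k).image (Behrend.map (5 * d)), ?_, ?_, ?_⟩
  · intro s1 m1 s2 m2 s3 m3 s4 m4 s5 m5 s6 m6 h
    simp only [mem_image] at m1 m2 m3 m4 m5 m6
    obtain ⟨v1, h1, rfl⟩ := m1
    obtain ⟨v2, h2, rfl⟩ := m2
    obtain ⟨v3, h3, rfl⟩ := m3
    obtain ⟨v4, h4, rfl⟩ := m4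
    obtain ⟨v5, h5, rfl⟩ := m5
    obtain ⟨v6, h6, rfl⟩ := m6
    have h' : Behrend.map (5 * d) (v1 + v2 + v3 + v4 + v5) = Behrend.map (5 * d) (5 • v6) := by
      simp only [map_add, map_nsmul, smul_eq_mul]; exact h
    have := Behrend.map_injOn (d := 5 * d) (n := n) ?_ ?_ h'
    · have e := sphere_conv v1 v2 v3 v4 v5 v6 h1 h2 h3 h4 h5 h6 (fun i => by
        have := congrFun this i
        simpa using this)
      rw [e]
    · intro i
      have := hb v1 h1 i
      have := hb v2 h2 i
      have := hb v3 h3 i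
      have := hb v4 h4 i
      have := hb v5 h5 i
      simp only [Pi.add_apply]; omega
    · intro i
      have := hb v6 h6 i
      simp only [Pi.smul_apply, smul_eq_mul]; omega
  · intro s hs
    simp only [mem_image] at hs
    obtain ⟨v, hv, rfl⟩ := hs
    exact my_map_lt _ _ (fun i => by have := hb v hv i; omega)
  · rw [card_image_of_injOn]
    · exact_mod_cast hk
    · intro v hv w hw h
      refine Behrend.map_injOn (d := 5 * d) (n := n) ?_ ?_ h
      · intro i
        have := hb v hv i; omega
      · intro i
        have := hb w hw i; omega

def isA (i : Fin 8) : Bool := i == 0 || i == 2 || i == 4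

def aB (i j : Fin 8) : Bool := isA i && !isA j &&
  !((i == 0 && j == 3) || (i == 2 && j == 5) || (i == 4 && j == 1))

def fB (i j : Fin 8) : Bool := aB i j || aB j i

def F1 : SimpleGraph (Fin 8) where
  Adj i j := fB i j = true
  symm := ⟨by unfold fB aB isA; decide⟩
  loopless := ⟨by unfold fB aB isA; decide⟩

def gB (i j : Fin 6) : Bool := i.val / 2 != j.val / 2

def F2 : SimpleGraph (Fin 6) where
  Adj i j := gB i j = true
  symm := ⟨by unfold gB; decide⟩
  loopless := ⟨by unfold gB; decide⟩

lemma F1_bip : IsBipGraph F1 := by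
  refine ⟨{i | isA i = true}, ?_, ?_⟩
  · show ∀ u, isA u = true → ∀ v, isA v = true → ¬ (fB u v = true)
    decide
  · show ∀ u, ¬ isA u = true → ∀ v, ¬ isA v = true → ¬ (fB u v = true)
    decide

lemma F2_cobip : IsCoBipGraph F2 := by
  refine ⟨{i | (i.val % 2 == 0) = true}, ?_, ?_⟩
  · show ∀ u : Fin 6, (u.val % 2 == 0) = true → ∀ v : Fin 6, (v.val % 2 == 0) = true → u ≠ v → (gB u v = true)
    decide
  · show ∀ u : Fin 6, ¬ (u.val % 2 == 0) = true → ∀ v : Fin 6, ¬ (v.val % 2 == 0) = true → u ≠ v → (gB u v = true)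
    decide

def Gr (S : Finset ℕ) (W : ℕ) : SimpleGraph (Fin 8 × Fin W) where
  Adj p r := (p.1 = r.1 ∧ isA p.1 = true ∧ p ≠ r) ∨
    (fB p.1 r.1 = true ∧ (6 ≤ p.1 ∨ 6 ≤ r.1 ∨
      ∃ s ∈ S, ((r.2 : ℕ) : ℤ) - ((p.2 : ℕ) : ℤ) = (((r.1 : ℕ) : ℤ) - ((p.1 : ℕ) : ℤ)) * (s : ℤ)))
  symm := ⟨by
    rintro p r (⟨h1, h2, h3⟩ | ⟨h1, h2⟩)
    · exact Or.inl ⟨h1.symm, h1 ▸ h2, h3.symm⟩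
    · refine Or.inr ⟨by rw [← h1]; simp [fB, Bool.or_comm], ?_⟩
      rcases h2 with h | h | ⟨s, hs, h⟩
      · exact Or.inr (Or.inl h)
      · exact Or.inl h
      · exact Or.inr (Or.inr ⟨s, hs, by linear_combination -h⟩)⟩
  loopless := ⟨by
    rintro p (⟨h1, h2, h3⟩ | ⟨h1, h2⟩)
    · exact h3 rfl
    · revert h1; generalize p.1 = i; revert i; decide⟩

lemma Gr_BB {S W} {p r : Fin 8 × Fin W} (h : (Gr S W).Adj p r) : isA p.1 = true ∨ isA r.1 = true := by
  rcases h with ⟨h1, h2, h3⟩ | ⟨h1, h2⟩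
  · exact Or.inl h2
  · revert h1; generalize p.1 = i; generalize r.1 = j; revert i j; decide

lemma Gr_AA {S W} {p r : Fin 8 × Fin W} (h : (Gr S W).Adj p r) (hp : isA p.1 = true)
    (hr : isA r.1 = true) : p.1 = r.1 := by
  rcases h with ⟨h1, h2, h3⟩ | ⟨h1, h2⟩
  · exact h1
  · exfalso; revert h1 hp hr; generalize p.1 = i; generalize r.1 = j; revert i j; decide

lemma Gr_cl {S W} {p r : Fin 8 × Fin W} (hp : isA p.1 = true) (h : p.1 = r.1) (hne : p ≠ r) :
    (Gr S W).Adj p r := Or.inl ⟨h, hp, hne⟩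

lemma boolF2 : ∀ f : Fin 6 → Bool, (∀ i j, gB i j = true → f i = true ∨ f j = true) →
   ∃ i j k, gB i j = true ∧ gB j k = true ∧ gB i k = false ∧ i ≠ k ∧ f i = true ∧ f j = true ∧ f k = true := by
  intro f h
  have h01 : ∀ a b : Fin 6, gB a b = true → f a = false → f b = true := by
    intro a b hab ha; rcases h a b hab with h | h <;> simp_all
  by_cases c0 : f 0 = true ∧ f 1 = true
  · by_cases c2 : f 2 = true
    · exact ⟨0, 2, 1, by decide, by decide, by decide, by decide, c0.1, c2, c0.2⟩
    · have c4 := h01 2 4 (by decide) (by simpa using c2)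
      exact ⟨0, 4, 1, by decide, by decide, by decide, by decide, c0.1, c4, c0.2⟩
  · have : ∃ a : Fin 6, (a = 0 ∨ a = 1) ∧ f a = false := by
      by_cases h0 : f 0 = true
      · exact ⟨1, Or.inr rfl, by simpa [h0] using c0⟩
      · exact ⟨0, Or.inl rfl, by simpa using h0⟩
    obtain ⟨a, ha, hfa⟩ := this
    have g : ∀ b : Fin 6, b = 2 ∨ b = 3 ∨ b = 4 ∨ b = 5 → f b = true := by
      intro b hb
      apply h01 a b _ hfa
      clear hfa; revert ha hb; revert a b; clear * -; decide
    exact ⟨2, 4, 3, by decide, by decide, by decide, by decide, g 2 (by simp), g 4 (by simp), g 3 (by simp)⟩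

lemma F2_free {S W} : IsEmpty (F2 ↪g Gr S W) := by
  refine ⟨fun φ => ?_⟩
  have had : ∀ i j, gB i j = true ↔ (Gr S W).Adj (φ i) (φ j) := fun i j => (φ.map_adj_iff (v := i) (w := j)).symm
  obtain ⟨i, j, k, h1, h2, h3, h4, a1, a2, a3⟩ := boolF2 (fun i => isA (φ i).1)
    (fun i j h => Gr_BB ((had i j).1 h))
  have e1 := Gr_AA ((had _ _).1 h1) a1 a2
  have e2 := Gr_AA ((had _ _).1 h2) a2 a3
  have := (had i k).2 (Gr_cl a1 (e1.trans e2) (fun h => h4 (φ.injective h)))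
  simp [this] at h3

def va (i : Fin 3) : Fin 8 := ![0, 2, 4] i
def vb (i : Fin 3) : Fin 8 := ![3, 5, 1] i

lemma partsA : ∀ i : Fin 8, isA i = true → ∃ k : Fin 3, i = va k := by
  unfold va; decide

lemma core_struct {S W} (φ : F1 ↪g Gr S W) : ∃ g : Fin 3 → Fin 3,
    (∀ k, (φ (va (g k))).1 = va k) ∧ (∀ k, (φ (vb (g k))).1 = vb k) ∧
    Function.Injective g := by
  have had : ∀ i j, fB i j = true ↔ (Gr S W).Adj (φ i) (φ j) := fun i j => (φ.map_adj_iff (v := i) (w := j)).symm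
  have hsep : ∀ i j, fB i j = false → i ≠ j → isA (φ i).1 = true → isA (φ j).1 = true →
      (φ i).1 ≠ (φ j).1 := by
    intro i j h hne hi hj e
    have := (had i j).2 (Gr_cl hi e (fun h => hne (φ.injective h)))
    simp [this] at h
  have hA : ∀ i, isA i = true → isA (φ i).1 = true := by
    intro i hi
    by_contra hn
    have hnb : ∀ j, fB i j = true → isA (φ j).1 = true := fun j hj =>
      (Gr_BB ((had i j).1 hj)).resolve_left hn
    have hp : ∃ f : Fin 4 → Fin 8, ∀ a, fB i (f a) = true ∧ ∀ b, a ≠ b → f a ≠ f b ∧ fB (f a) (f b) = false := by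
      have : i = 0 ∨ i = 2 ∨ i = 4 := by revert hi; clear * -; revert i; decide
      rcases this with rfl | rfl | rfl
      · exact ⟨![1, 5, 6, 7], by decide⟩
      · exact ⟨![1, 3, 6, 7], by decide⟩
      · exact ⟨![3, 5, 6, 7], by decide⟩
    obtain ⟨f, hf⟩ := hp
    choose t ht using fun a => partsA _ (hnb _ (hf a).1)
    obtain ⟨a, b, hab, e⟩ := Fintype.exists_ne_map_eq_of_card_lt t (by simp)
    refine hsep (f a) (f b) ((hf a).2 b hab).2 ((hf a).2 b hab).1 (hnb _ (hf a).1) (hnb _ (hf b).1) ?_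
    rw [ht a, ht b, e]
  have hva : ∀ k, isA (va k) = true := by unfold va; decide
  choose f hf using fun k => partsA _ (hA _ (hva k))
  have finj : Function.Injective f := by
    intro a b e
    by_contra hne
    refine hsep (va a) (va b) ?_ ?_ (hA _ (hva a)) (hA _ (hva b)) (by rw [hf a, hf b, e])
    · clear e; revert a b; clear * -; unfold va; decide
    · clear e; revert a b; clear * -; unfold va; decide
  have fbij := Finite.injective_iff_bijective.1 finj
  have hvb : ∀ k, (φ (vb k)).1 = vb (f k) := by
    intro k
    have nb : ∀ l, l ≠ k → fB (va l) (vb k) = true := by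
      revert k; clear * -; unfold va vb; decide
    have hB : isA (φ (vb k)).1 = false := by
      by_contra hn
      rw [Bool.not_eq_false] at hn
      have : ∃ l m, l ≠ k ∧ m ≠ k ∧ l ≠ m := by clear hn nb; revert k; clear * -; decide
      obtain ⟨l, m, hl, hm, hlm⟩ := this
      have e1 := Gr_AA ((had _ _).1 (nb l hl)) (hA _ (hva l)) hn
      have e2 := Gr_AA ((had _ _).1 (nb m hm)) (hA _ (hva m)) hn
      rw [← e2, hf, hf] at e1
      have : f l = f m := by
        revert e1; generalize f l = x; generalize f m = y; revert x y; clear * -; unfold va; decide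
      exact hlm (finj this)
    have hadj : ∀ l, l ≠ f k → fB (va l) (φ (vb k)).1 = true := by
      intro l hl
      obtain ⟨l', rfl⟩ := fbij.2 l
      rcases (had _ _).1 (nb l' (fun h => hl (by rw [h]))) with ⟨h1, h2, h3⟩ | ⟨h1, h2⟩
      · rw [h1, hB] at h2; simp at h2
      · rwa [hf] at h1
    have hnot : ¬ 6 ≤ (φ (vb k)).1 := by
      intro h6
      have : fB (va k) (vb k) = true := by
        rw [had]
        refine Or.inr ⟨?_, Or.inr (Or.inl h6)⟩
        rw [hf]
        revert h6; generalize (φ (vb k)).1 = z; generalize f k = y; revert z y; clear * -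
        unfold va; decide
      revert this; clear * -; revert k; unfold va vb; decide
    revert hB hadj hnot; generalize (φ (vb k)).1 = z; generalize f k = y; revert z y; clear * -
    unfold va vb; decide
  obtain ⟨g, hgl, hgr⟩ := Function.bijective_iff_has_inverse.1 fbij
  exact ⟨g, fun k => by rw [hf, hgr], fun k => by rw [hvb, hgr], hgr.injective⟩

lemma core_triple {S W} (hS : FreeSet S) (φ : F1 ↪g Gr S W) : ∃ x y z : Fin W,
    (x : ℕ) + z = 2 * y ∧ (0, x) ∈ Set.range φ ∧ (1, y) ∈ Set.range φ ∧ (2, z) ∈ Set.range φ := by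
  obtain ⟨g, ha, hb, hg⟩ := core_struct φ
  have key : ∀ k l, k ≠ l → ∃ s ∈ S, (((φ (vb (g l))).2 : ℕ) : ℤ) - (((φ (va (g k))).2 : ℕ) : ℤ) =
      (((vb l : ℕ) : ℤ) - ((va k : ℕ) : ℤ)) * (s : ℤ) := by
    intro k l hkl
    have h1 : fB (va (g k)) (vb (g l)) = true := by
      have : g k ≠ g l := fun h => hkl (hg h)
      revert this; generalize g k = a; generalize g l = b; revert a b; clear * -; unfold va vb; decide
    rcases (φ.map_adj_iff (v := va (g k)) (w := vb (g l))).2 h1 with ⟨h1, h2, h3⟩ | ⟨h1, h2⟩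
    · rw [ha, hb] at h1; exfalso; revert h1; clear * -; revert k l; unfold va vb; decide
    · rw [ha, hb] at h2
      rcases h2 with h | h | h
      · exfalso; revert h; clear * -; revert k; unfold va; decide
      · exfalso; revert h; clear * -; revert l; unfold vb; decide
      · exact h
  obtain ⟨s1, m1, e1⟩ := key 0 2 (by decide)
  obtain ⟨s2, m2, e2⟩ := key 1 2 (by decide)
  obtain ⟨s3, m3, e3⟩ := key 1 0 (by decide)
  obtain ⟨s4, m4, e4⟩ := key 2 0 (by decide)
  obtain ⟨s5, m5, e5⟩ := key 2 1 (by decide)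
  obtain ⟨s6, m6, e6⟩ := key 0 1 (by decide)
  have n0 : ((va 0 : ℕ) : ℤ) = 0 := by decide
  have n1 : ((va 1 : ℕ) : ℤ) = 2 := by decide
  have n2 : ((va 2 : ℕ) : ℤ) = 4 := by decide
  have k0 : ((vb 0 : ℕ) : ℤ) = 3 := by decide
  have k1 : ((vb 1 : ℕ) : ℤ) = 5 := by decide
  have k2 : ((vb 2 : ℕ) : ℤ) = 1 := by decide
  rw [n0, k2] at e1
  rw [n1, k2] at e2
  rw [n1, k0] at e3
  rw [n2, k0] at e4
  rw [n2, k1] at e5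
  rw [n0, k1] at e6
  have hs : s1 = s2 := hS s1 m1 s2 m2 s3 m3 s4 m4 s5 m5 s6 m6 (by omega)
  refine ⟨(φ (va (g 0))).2, (φ (vb (g 2))).2, (φ (va (g 1))).2, by omega, ⟨va (g 0), ?_⟩, ⟨vb (g 2), ?_⟩, ⟨va (g 1), ?_⟩⟩
  · exact Prod.ext (ha 0) rfl
  · exact Prod.ext (hb 2) rfl
  · exact Prod.ext (ha 1) rfl

def GG (S : Finset ℕ) (W : ℕ) : SimpleGraph (Fin (8 * W)) :=
  (Gr S W).comap (finProdFinEquiv (m := 8) (n := W)).symm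

def GGiso (S : Finset ℕ) (W : ℕ) : GG S W ↪g Gr S W where
  toFun := (finProdFinEquiv (m := 8) (n := W)).symm
  inj' := Equiv.injective _
  map_rel_iff' := Iff.rfl

lemma far_lem {S : Finset ℕ} {M : ℕ} (hS : ∀ s ∈ S, s < M) (H : SimpleGraph (Fin (8 * (8 * M))))
    (hH : IsEmpty (F1 ↪g H)) : M * S.card ≤ editDist (GG S (8 * M)) H := by
  rcases Nat.eq_zero_or_pos M with h0 | hM0
  · simp [h0]
  have hlt : ∀ (p : ℕ × ℕ), p ∈ range M ×ˢ S → ∀ i : Fin 8, p.1 + i * p.2 < 8 * M := by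
    intro p hp i
    rw [mem_product, mem_range] at hp
    have h1 := hS _ hp.2
    have h2 : (i : ℕ) * p.2 ≤ 7 * p.2 := Nat.mul_le_mul_right _ (by omega)
    omega
  let ψ : (p : ℕ × ℕ) → p ∈ range M ×ˢ S → Fin 8 → Fin (8 * (8 * M)) := fun p hp i =>
    finProdFinEquiv (i, (⟨p.1 + i * p.2, hlt p hp i⟩ : Fin (8 * M)))
  have hψinj : ∀ p hp p' hp' i j, ψ p hp i = ψ p' hp' j → i = j ∧ p.1 + i * p.2 = p'.1 + j * p'.2 := by
    intro p hp p' hp' i j h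
    have := finProdFinEquiv.injective h
    simp only [Prod.mk.injEq, Fin.mk.injEq] at this
    exact this
  have hadj : ∀ p hp i j, (GG S (8 * M)).Adj (ψ p hp i) (ψ p hp j) ↔ F1.Adj i j := by
    intro p hp i j
    rw [mem_product] at hp
    simp only [GG, SimpleGraph.comap_adj, ψ, Equiv.symm_apply_apply]
    constructor
    · rintro (⟨h1, h2, h3⟩ | ⟨h1, h2⟩)
      · simp only at h1
        subst h1
        exact absurd rfl h3
      · exact h1
    · intro h
      refine Or.inr ⟨h, Or.inr (Or.inr ⟨p.2, hp.2, ?_⟩)⟩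
      push_cast
      ring
  have hex : ∀ p hp, ∃ i j, i ≠ j ∧ ¬ (H.Adj (ψ p hp i) (ψ p hp j) ↔ (GG S (8 * M)).Adj (ψ p hp i) (ψ p hp j)) := by
    intro p hp
    by_contra hcon
    push Not at hcon
    refine hH.false ⟨⟨ψ p hp, fun i j h => (hψinj p hp p hp i j h).1⟩, ?_⟩
    intro i j
    by_cases hij : i = j
    · subst hij; simp
    · exact (hcon i j hij).trans (hadj p hp i j)
  choose! I J hne hd using hex
  have : (range M ×ˢ S).card ≤ editDist (GG S (8 * M)) H := by
    unfold editDist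
    rw [Set.ncard_eq_toFinset_card']
    refine card_le_card_of_injOn (fun p => if hp : p ∈ range M ×ˢ S then s(ψ p hp (I p), ψ p hp (J p)) else s(⟨0, by omega⟩, ⟨0, by omega⟩)) ?_ ?_
    · intro p hp
      have hp' : p ∈ range M ×ˢ S := hp
      simp only [hp', dif_pos, Set.coe_toFinset, Set.mem_ofPred_eq, SimpleGraph.mem_edgeSet]
      have := hd p hp'
      tauto
    · intro p hp p' hp' h
      have hp1 : p ∈ range M ×ˢ S := hp
      have hp1' : p' ∈ range M ×ˢ S := hp'
      simp only [hp1, hp1', dif_pos] at h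
      have key : ∃ i j : Fin 8, i ≠ j ∧ p.1 + i * p.2 = p'.1 + i * p'.2 ∧ p.1 + j * p.2 = p'.1 + j * p'.2 := by
        rw [Sym2.eq_iff] at h
        refine ⟨I p, J p, hne p hp1, ?_⟩
        rcases h with ⟨h1, h2⟩ | ⟨h1, h2⟩
        · obtain ⟨q1, r1⟩ := hψinj p hp1 p' hp1' _ _ h1
          obtain ⟨q2, r2⟩ := hψinj p hp1 p' hp1' _ _ h2
          rw [← q1] at r1; rw [← q2] at r2
          exact ⟨r1, r2⟩
        · obtain ⟨q1, r1⟩ := hψinj p hp1 p' hp1' _ _ h1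
          obtain ⟨q2, r2⟩ := hψinj p hp1 p' hp1' _ _ h2
          rw [← q1] at r1; rw [← q2] at r2
          exact ⟨r1, r2⟩
      obtain ⟨i, j, hij, e1, e2⟩ := key
      have hij' : ((i : ℕ) : ℤ) - ((j : ℕ) : ℤ) ≠ 0 := by
        intro h; apply hij; apply Fin.ext; omega
      have e1' : (p.1 : ℤ) + ((i : ℕ) : ℤ) * p.2 = p'.1 + ((i : ℕ) : ℤ) * p'.2 := by exact_mod_cast e1
      have e2' : (p.1 : ℤ) + ((j : ℕ) : ℤ) * p.2 = p'.1 + ((j : ℕ) : ℤ) * p'.2 := by exact_mod_cast e2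
      have : (((i : ℕ) : ℤ) - ((j : ℕ) : ℤ)) * ((p.2 : ℤ) - p'.2) = 0 := by linear_combination e1' - e2'
      have h2 : (p.2 : ℤ) = p'.2 := by
        rcases mul_eq_zero.1 this with h | h
        · exact absurd h hij'
        · omega
      have h2' : p.2 = p'.2 := by exact_mod_cast h2
      rw [h2'] at e1
      exact Prod.ext (by omega) h2'
  simpa using this

def trip {W : ℕ} (t : Fin W × Fin W × Fin W) : Finset (Fin (8 * W)) :=
  {finProdFinEquiv ((0 : Fin 8), t.1), finProdFinEquiv ((1 : Fin 8), t.2.1), finProdFinEquiv ((2 : Fin 8), t.2.2)}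

lemma trip_card {W : ℕ} (t : Fin W × Fin W × Fin W) : (trip t).card = 3 := by
  unfold trip
  rw [card_eq_three]
  refine ⟨_, _, _, ?_, ?_, ?_, rfl⟩ <;>
  · intro h
    have := finProdFinEquiv.injective h
    simp at this

lemma bad_lem {S : Finset ℕ} {W q : ℕ} (hS : FreeSet S) (Q : Finset (Fin (8 * W))) (h : Q.card = q)
    (hb : inducedOn (GG S W) Q h ∉ InducedFree ({⟨8, F1⟩, ⟨6, F2⟩} : Set (Σ k : ℕ, SimpleGraph (Fin k))) q) :
    ∃ t : Fin W × Fin W × Fin W, (t.1 : ℕ) + t.2.2 = 2 * t.2.1 ∧ trip t ⊆ Q := by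
  let θ : inducedOn (GG S W) Q h ↪g GG S W :=
    { toFun := fun i => ((Q.orderIsoOfFin h) i : Fin (8 * W))
      inj' := fun a b hab => (Q.orderIsoOfFin h).injective (Subtype.ext hab)
      map_rel_iff' := Iff.rfl }
  have hθ : ∀ i, θ i ∈ Q := fun i => ((Q.orderIsoOfFin h) i).2
  have : Nonempty (F1 ↪g inducedOn (GG S W) Q h) := by
    by_contra hn
    apply hb
    intro p hp
    rcases hp with rfl | rfl
    · exact not_nonempty_iff.1 hn
    · exact ⟨fun φ => F2_free.false ((φ.trans θ).trans (GGiso S W))⟩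
  obtain ⟨φ⟩ := this
  obtain ⟨x, y, z, hxyz, ⟨i, hi⟩, ⟨j, hj⟩, ⟨k, hk⟩⟩ := core_triple hS ((φ.trans θ).trans (GGiso S W))
  refine ⟨(x, y, z), hxyz, ?_⟩
  have conv : ∀ i w, ((φ.trans θ).trans (GGiso S W)) i = w → finProdFinEquiv w ∈ Q := by
    intro i w hw
    have : (finProdFinEquiv (m := 8) (n := W)).symm (θ (φ i)) = w := hw
    rw [← this, Equiv.apply_symm_apply]
    exact hθ _
  intro v hv
  simp only [trip, mem_insert, mem_singleton] at hv
  rcases hv with rfl | rfl | rfl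
  · exact conv _ _ hi
  · exact conv _ _ hj
  · exact conv _ _ hk

lemma card_sup {N q : ℕ} (T : Finset (Fin N)) (hT : T.card = 3) :
    (((univ : Finset (Fin N)).powersetCard q).filter (fun Q => T ⊆ Q)).card ≤ (N - 3).choose (q - 3) := by
  have : (powersetCard (q - 3) (univ \ T)).card = (N - 3).choose (q - 3) := by
    rw [card_powersetCard, card_sdiff_of_subset (subset_univ _), hT, card_univ, Fintype.card_fin]
  rw [← this]
  refine card_le_card_of_injOn (fun Q => Q \ T) ?_ ?_
  · intro Q hQ
    simp only [coe_filter, mem_powersetCard, Set.mem_ofPred_eq] at hQ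
    simp only [mem_coe, mem_powersetCard]
    refine ⟨sdiff_subset_sdiff (subset_univ _) (subset_refl _), ?_⟩
    rw [card_sdiff_of_subset hQ.2, hT, hQ.1.2]
  · intro Q hQ Q' hQ' h
    simp only [coe_filter, mem_powersetCard, Set.mem_ofPred_eq] at hQ hQ'
    simp only at h
    rw [← sdiff_union_of_subset hQ.2, h, sdiff_union_of_subset hQ'.2]

lemma count_lem {S : Finset ℕ} {W q : ℕ} (hS : FreeSet S) :
    (((univ : Finset (Fin (8 * W))).powersetCard q).filter
      fun Q => ∃ h : Q.card = q, inducedOn (GG S W) Q h ∉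
        InducedFree ({⟨8, F1⟩, ⟨6, F2⟩} : Set (Σ k : ℕ, SimpleGraph (Fin k))) q).card
      ≤ W ^ 2 * (8 * W - 3).choose (q - 3) := by
  let T : Finset (Fin W × Fin W × Fin W) := univ.filter fun t => (t.1 : ℕ) + t.2.2 = 2 * t.2.1
  have hTc : T.card ≤ W ^ 2 := by
    have : (univ : Finset (Fin W × Fin W)).card = W ^ 2 := by simp [sq]
    rw [← this]
    refine card_le_card_of_injOn (fun t => (t.1, t.2.1)) (fun _ _ => by simp) ?_
    rintro ⟨x, y, z⟩ h ⟨x', y', z'⟩ h' e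
    simp only [T, coe_filter, mem_univ, true_and, Set.mem_ofPred_eq] at h h'
    simp only [Prod.mk.injEq] at e
    obtain ⟨rfl, rfl⟩ := e
    have : z = z' := Fin.ext (by omega)
    rw [this]
  calc _ ≤ (T.biUnion fun t => ((univ : Finset (Fin (8 * W))).powersetCard q).filter
          (fun Q => trip t ⊆ Q)).card := by
        apply card_le_card
        intro Q hQ
        rw [mem_filter] at hQ
        obtain ⟨hQ, h, hb⟩ := hQ
        obtain ⟨t, ht, hs⟩ := bad_lem hS Q h hb
        rw [mem_biUnion]
        exact ⟨t, by simp [T, ht], mem_filter.2 ⟨hQ, hs⟩⟩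
    _ ≤ T.card * (8 * W - 3).choose (q - 3) :=
        card_biUnion_le_card_mul _ _ _ (fun t _ => card_sup _ (trip_card t))
    _ ≤ _ := Nat.mul_le_mul_right _ hTc

lemma count_final {S : Finset ℕ} {W q : ℕ} (hS : FreeSet S) (hW : 1 ≤ W) (hq : q ≤ 8 * W)
    (h3 : 3 * q ^ 3 ≤ 8 * W) :
    ((((univ : Finset (Fin (8 * W))).powersetCard q).filter
      fun Q => ∃ h : Q.card = q, inducedOn (GG S W) Q h ∉
        InducedFree ({⟨8, F1⟩, ⟨6, F2⟩} : Set (Σ k : ℕ, SimpleGraph (Fin k))) q).card : ℝ)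
      < (2 / 3 : ℝ) * (((Finset.univ : Finset (Fin (8 * W))).powersetCard q).card : ℝ) := by
  have hpos : 0 < (8 * W).choose q := Nat.choose_pos hq
  have hcard : ((Finset.univ : Finset (Fin (8 * W))).powersetCard q).card = (8 * W).choose q := by simp
  rw [hcard]
  by_cases h3q : 3 ≤ q
  · have hc := count_lem (W := W) (q := q) hS
    have hm := Nat.choose_mul (n := 8 * W) h3q
    have hq3 : q.choose 3 * 6 ≤ q ^ 3 := by
      have := Nat.descFactorial_eq_factorial_mul_choose q 3
      have h2 := Nat.descFactorial_le_pow q 3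
      have h6 : Nat.factorial 3 = 6 := rfl
      rw [h6] at this
      omega
    have hN3 : (6 * W) ^ 3 ≤ (8 * W).choose 3 * 6 := by
      have := Nat.descFactorial_eq_factorial_mul_choose (8 * W) 3
      have h2 := Nat.pow_sub_le_descFactorial (8 * W) 3
      have h6 : Nat.factorial 3 = 6 := rfl
      rw [h6] at this
      have : (6 * W) ^ 3 ≤ (8 * W + 1 - 3) ^ 3 := Nat.pow_le_pow_left (by omega) 3
      omega
    generalize (8 * W - 3).choose (q - 3) = X at *
    generalize (8 * W).choose q = Y at *
    generalize (8 * W).choose 3 = Z at *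
    generalize q.choose 3 = R at *
    generalize Finset.card _ = B at hc ⊢
    have : 3 * B < 2 * Y := by
      have a1 : X * (6 * W) ^ 3 ≤ Y * q ^ 3 := by
        calc X * (6 * W) ^ 3 ≤ X * (Z * 6) := Nat.mul_le_mul_left _ hN3
          _ = (Z * X) * 6 := by ring
          _ = Y * (R * 6) := by rw [← hm]; ring
          _ ≤ _ := Nat.mul_le_mul_left _ hq3
      have a2 : W * (648 * (W ^ 2 * X)) ≤ W * (8 * Y) := by
        calc W * (648 * (W ^ 2 * X)) = 3 * (X * (6 * W) ^ 3) := by ring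
          _ ≤ 3 * (Y * q ^ 3) := Nat.mul_le_mul_left _ a1
          _ = Y * (3 * q ^ 3) := by ring
          _ ≤ Y * (8 * W) := Nat.mul_le_mul_left _ h3
          _ = _ := by ring
      have a3 := Nat.le_of_mul_le_mul_left a2 hW
      omega
    have h' : (3 : ℝ) * B < 2 * Y := by exact_mod_cast this
    linarith
  · have : (((univ : Finset (Fin (8 * W))).powersetCard q).filter
      fun Q => ∃ h : Q.card = q, inducedOn (GG S W) Q h ∉
        InducedFree ({⟨8, F1⟩, ⟨6, F2⟩} : Set (Σ k : ℕ, SimpleGraph (Fin k))) q) = ∅ := by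
      rw [filter_eq_empty_iff]
      rintro Q hQ ⟨h, hb⟩
      obtain ⟨t, ht, hs⟩ := bad_lem hS Q h hb
      have := card_le_card hs
      rw [trip_card] at this
      omega
    rw [this]
    have : (0 : ℝ) < ((8 * W).choose q : ℝ) := by exact_mod_cast hpos
    simp only [card_empty, Nat.cast_zero]
    linarith

lemma not_easy : ¬ EasilyTestable (InducedFree ({⟨8, F1⟩, ⟨6, F2⟩} : Set (Σ k : ℕ, SimpleGraph (Fin k)))) := by
  rintro ⟨c, hc, hall⟩
  obtain ⟨c', hc'⟩ := exists_nat_ge c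
  set n : ℕ := 6 * c' + 1 with hn
  set C : ℕ := 4096 * n * 5 ^ n with hC
  set d : ℕ := C ^ (3 * c') with hd
  have hCpos : 0 < C := by positivity
  have hdpos : 0 < d := by positivity
  obtain ⟨S, hS, hlt, hcard⟩ := exists_set n d
  set M : ℕ := (5 * d) ^ n with hM
  have hMpos : 0 < M := by positivity
  have hSM : S.card ≤ M := by
    have : S ⊆ range M := fun s hs => mem_range.2 (hlt s hs)
    simpa using card_le_card this
  have hnpos : 0 < n := by omega
  have hScard : (0 : ℝ) < S.card := lt_of_lt_of_le (by positivity) hcard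
  have hMr : (0 : ℝ) < M := by exact_mod_cast hMpos
  set ε : ℝ := S.card / (4096 * M) with hε
  have hε0 : 0 < ε := by positivity
  have hε1 : ε < 1 / 2 := by
    rw [hε, div_lt_iff₀ (by positivity)]
    have : (S.card : ℝ) ≤ M := by exact_mod_cast hSM
    linarith
  have hinv : ε⁻¹ ≤ C * d ^ 2 := by
    rw [hε, inv_div, div_le_iff₀ hScard]
    have hnd : (0 : ℝ) < ((n * d ^ 2 : ℕ) : ℝ) := by positivity
    rw [div_le_iff₀ hnd] at hcard
    have e1 : (M : ℝ) = 5 ^ n * d ^ n := by rw [hM]; push_cast; ring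
    have e2 : (C : ℝ) = 4096 * n * 5 ^ n := by rw [hC]; push_cast; ring
    rw [e1, e2]
    push_cast at hcard
    have := mul_le_mul_of_nonneg_left hcard (show (0 : ℝ) ≤ 4096 * 5 ^ n by positivity)
    nlinarith [this]
  have hpow : ε ^ (-c) ≤ ((C * d ^ 2) ^ c' : ℕ) := by
    rw [Real.rpow_neg hε0.le, ← Real.inv_rpow hε0.le]
    have h1 : 1 ≤ ε⁻¹ := by
      rw [one_le_inv₀ hε0]; linarith
    calc ε⁻¹ ^ c ≤ ε⁻¹ ^ (c' : ℝ) := Real.rpow_le_rpow_of_exponent_le h1 hc'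
      _ = ε⁻¹ ^ c' := Real.rpow_natCast _ _
      _ ≤ (C * d ^ 2) ^ c' := pow_le_pow_left₀ (by positivity) hinv _
      _ = _ := by push_cast; ring
  have hq : ⌈ε ^ (-c)⌉₊ ≤ (C * d ^ 2) ^ c' := Nat.ceil_le.2 hpow
  have hq3 : ⌈ε ^ (-c)⌉₊ ^ 3 ≤ M := by
    calc ⌈ε ^ (-c)⌉₊ ^ 3 ≤ ((C * d ^ 2) ^ c') ^ 3 := Nat.pow_le_pow_left hq 3
      _ = C ^ (3 * c') * d ^ (6 * c') := by ring
      _ = d ^ n := by rw [← hd, hn]; ring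
      _ ≤ M := Nat.pow_le_pow_left (by omega) n
  have hqM : ⌈ε ^ (-c)⌉₊ ≤ M := (Nat.le_self_pow (by norm_num) _).trans hq3
  have := hall ε hε0 hε1 (8 * (8 * M)) (GG S (8 * M)) ?_ ?_
  · exact absurd this (not_le.2 (count_final hS (by omega) (by omega) (by omega)))
  · calc ε ^ (-c) ≤ (⌈ε ^ (-c)⌉₊ : ℝ) := Nat.le_ceil _
      _ ≤ _ := by exact_mod_cast (by omega)
  · intro H hH
    have h1 := far_lem hlt H (hH ⟨8, F1⟩ (Or.inl rfl))
    have h2 : ((M * S.card : ℕ) : ℝ) ≤ editDist (GG S (8 * M)) H := by exact_mod_cast h1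
    refine le_trans (le_of_eq ?_) h2
    rw [hε]; push_cast; field_simp; norm_num

/-- There are a bipartite graph `F₁` and a co-bipartite graph `F₂` such that
being induced `{F₁, F₂}`-free is not easily testable. -/
theorem exists_bip_cobip_not_easily_testable :
    ∃ (a b : ℕ) (F₁ : SimpleGraph (Fin a)) (F₂ : SimpleGraph (Fin b)),
      IsBipGraph F₁ ∧ IsCoBipGraph F₂ ∧
      ¬ EasilyTestable (InducedFree ({⟨a, F₁⟩, ⟨b, F₂⟩} : Set (Σ k : ℕ, SimpleGraph (Fin k)))) := by
  exact ⟨8, 6, F1, F2, F1_bip, F2_cobip, not_easy⟩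

end
end
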